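/- Up to isomorphism, there are exactly 6 distributive Mendelsohn quasigroups of order 243 that are not medial. -/

import Mathlib

/-- A quasigroup: a set with a binary operation whose left and right
translations are bijections. -/
structure Quasigroup (Q : Type) where
  mul : Q → Q → Q
  leftBij : ∀ x, Function.Bijective fun y => mul x y
  rightBij : ∀ x, Function.Bijective fun y => mul y x

namespace Quasigroup

/-- Mediality: (x*y)*(u*v) = (x*u)*(y*v). -/
def Medial {Q : Type} (q : Quasigroup Q) : Prop :=
  ∀ x y u v, q.mul (q.mul x y) (q.mul u v) = q.mul (q.mul x u) (q.mul y v)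

/-- Distributivity: both left and right self-distributivity. -/
def Distributive {Q : Type} (q : Quasigroup Q) : Prop :=
  (∀ x y z, q.mul x (q.mul y z) = q.mul (q.mul x y) (q.mul x z)) ∧
  (∀ x y z, q.mul (q.mul x y) z = q.mul (q.mul x z) (q.mul y z))

/-- Idempotency: x*x = x. -/
def Idempotent {Q : Type} (q : Quasigroup Q) : Prop := ∀ x, q.mul x x = x

/-- Mendelsohn quasigroup: idempotent and semisymmetric. -/
def Mendelsohn {Q : Type} (q : Quasigroup Q) : Prop :=
  Idempotent q ∧ ∀ x y, q.mul y (q.mul x y) = x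

/-- A subquasigroup: a subset closed under multiplication, left division
and right division. -/
def IsSubquasigroup {Q : Type} (q : Quasigroup Q) (S : Set Q) : Prop :=
  (∀ x ∈ S, ∀ y ∈ S, q.mul x y ∈ S) ∧
  (∀ x ∈ S, ∀ z ∈ S, ∀ y, q.mul x y = z → y ∈ S) ∧
  (∀ y ∈ S, ∀ z ∈ S, ∀ x, q.mul x y = z → x ∈ S)

/-- The smallest subquasigroup containing `a`, `b`, `c`. -/
def genSet {Q : Type} (q : Quasigroup Q) (a b c : Q) : Set Q :=
  ⋂₀ {S : Set Q | IsSubquasigroup q S ∧ a ∈ S ∧ b ∈ S ∧ c ∈ S}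

/-- Trimediality: every subquasigroup generated by three elements is medial. -/
def Trimedial {Q : Type} (q : Quasigroup Q) : Prop :=
  ∀ a b c : Q, ∀ x ∈ genSet q a b c, ∀ y ∈ genSet q a b c,
    ∀ u ∈ genSet q a b c, ∀ v ∈ genSet q a b c,
      q.mul (q.mul x y) (q.mul u v) = q.mul (q.mul x u) (q.mul y v)

/-- Isomorphism of quasigroups. -/
def Iso {Q₁ Q₂ : Type} (q₁ : Quasigroup Q₁) (q₂ : Quasigroup Q₂) : Prop :=
  ∃ f : Q₁ ≃ Q₂, ∀ x y, f (q₁.mul x y) = q₂.mul (f x) (f y)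

end Quasigroup


/-- A distributive Mendelsohn operation (with two-sided semisymmetry). -/
structure DM {Q : Type} (m : Q → Q → Q) : Prop where
  idem : ∀ x, m x x = x
  ss : ∀ x y, m y (m x y) = x
  ss' : ∀ x y, m (m x y) x = y
  ld : ∀ x y z, m x (m y z) = m (m x y) (m x z)
  rd : ∀ x y z, m (m x y) z = m (m x z) (m y z)

/-- Commutative Moufang loops. -/
class CML (Q : Type) extends Add Q, Zero Q, Neg Q where
  comm : ∀ x y : Q, x + y = y + x
  zadd : ∀ x : Q, 0 + x = x
  ip : ∀ x y : Q, -x + (x + y) = y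
  negadd : ∀ x y : Q, -(x + y) = -x + -y
  law : ∀ x y z : Q, (x + x) + (y + z) = (x + y) + (x + z)

namespace DM
variable {Q : Type} {m : Q → Q → Q} (h : DM m) (o : Q)

/-- loop addition -/
@[nolint unusedArguments]
def ad (_h : DM m) (o x y : Q) : Q := m (m o x) (m y o)

theorem za (x : Q) : h.ad o o x = x := by simp [ad, h.idem, h.ss]
theorem az (x : Q) : h.ad o x o = x := by simp [ad, h.idem, h.ss']
theorem psi_ad (x y : Q) : m o (h.ad o x y) = h.ad o (m o x) (m o y) := by
  simp only [ad]; rw [h.ld, h.ld o y o, h.idem]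
theorem phi_ad (x y : Q) : m (h.ad o x y) o = h.ad o (m x o) (m y o) := by
  simp only [ad]; rw [h.rd, h.rd o x o, h.idem]
theorem m_eq (x y : Q) : m x y = h.ad o (m x o) (m o y) := by
  simp only [ad]; rw [h.ss, h.ss']
theorem one (X A B : Q) : h.ad o X (h.ad o A B) =
    h.ad o (h.ad o (m X o) A) (h.ad o (m o X) B) := by
  simp only [ad, h.ss]
  rw [h.rd (m o A) (m B o) o, h.ss', h.ld (m o X), h.ld o X, h.ss, h.rd (m o (m o X)), h.ss']
/-- cube of psi -/
@[nolint unusedArguments]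
def J (_h : DM m) (o x : Q) : Q := m o (m o (m o x))
theorem J_eq (x : Q) : h.J o x = m (m (m x o) o) o := by
  have h1 : m (m x o) (m o x) = h.J o x := by
    rw [h.rd x o (m o x), h.ss]; rfl
  rw [← h1, h.ld (m x o) o x, h.ss']
theorem JJ (x : Q) : h.J o (h.J o x) = x := by
  rw [h.J_eq o x]; simp only [J, h.ss]
theorem three (X x : Q) : h.ad o X (h.ad o x (h.J o X)) = x := by
  simp only [ad, J]; rw [h.rd (m o x) _ o, h.ss' o x]; simp only [h.ss', h.ss]
theorem J_ad (x y : Q) : h.J o (h.ad o x y) = h.ad o (h.J o x) (h.J o y) := by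
  simp only [J, h.psi_ad]
theorem J_o : h.J o o = o := by simp [J, h.idem]
theorem XJ (X : Q) : h.ad o X (h.J o X) = o := by
  have := h.three o X o; rwa [h.za] at this
theorem JX (X : Q) : h.ad o (h.J o X) X = o := by
  have := h.XJ o (h.J o X); rwa [h.JJ] at this

/-- the commutator automorphism -/
def w (X z : Q) : Q := h.ad o (h.J o X) (h.ad o X z)
theorem w_o (X : Q) : h.w o X o = o := by simp [w, h.az, h.JX]
theorem w_ad' (X A B : Q) : h.w o X (h.ad o A B) =
    h.ad o (h.w o (m X o) A) (h.w o (m o X) B) := by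
  have e1 : m (h.J o X) o = h.J o (m X o) := by simp only [J, h.ss, h.ss']
  have e2 : m o (h.J o X) = h.J o (m o X) := rfl
  simp only [w]
  rw [h.one o X, h.one o (h.J o X), e1, e2]
theorem w_phi (X A : Q) : h.w o (m X o) A = h.w o X A := by
  have := h.w_ad' o X A o
  rw [h.w_o, h.az, h.az] at this; exact this.symm
theorem w_psi (X A : Q) : h.w o (m o X) A = h.w o X A := by
  have := h.w_ad' o X o A
  rw [h.w_o, h.za, h.za] at this; exact this.symm
theorem w_ad (X A B : Q) : h.w o X (h.ad o A B) = h.ad o (h.w o X A) (h.w o X B) := by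
  rw [w_ad', w_phi, w_psi]
theorem w_comm_psi (X z : Q) : m o (h.w o X z) = h.w o X (m o z) := by
  rw [← h.w_psi o X (m o z)]
  simp only [w, h.psi_ad]; rfl
theorem w_J (X A : Q) : h.w o (h.J o X) A = h.w o X A := by
  simp only [J, w_psi]
theorem w_swap (X z : Q) : h.ad o X z = h.w o X (h.ad o z X) := by
  have e : h.ad o (h.J o X) (h.ad o z X) = z := by
    have := h.three o (h.J o X) z; rwa [h.JJ] at this
  rw [← h.w_J]; simp only [w, h.JJ]; rw [e]
theorem inj {a b c : Q} (e : h.ad o a b = h.ad o a c) : b = c := by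
  simp only [ad] at e
  have e2 := congrArg (fun t => m t (m o a)) e
  simp only [h.ss'] at e2
  have e3 := congrArg (fun t => m o t) e2
  simpa only [h.ss] using e3
theorem inj' {a b c : Q} (e : h.ad o b a = h.ad o c a) : b = c := by
  simp only [ad] at e
  have e2 := congrArg (fun t => m (m a o) t) e
  simp only [h.ss] at e2
  have e3 := congrArg (fun t => m t o) e2
  simpa only [h.ss'] using e3
theorem add_w (X z : Q) : h.ad o X z = h.ad o (h.w o X z) X := by
  apply h.inj o (a := h.J o X)
  have := h.three o (h.J o X) (h.w o X z)
  rw [h.JJ] at this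
  rw [this]; rfl
theorem w_self (X : Q) : h.w o X X = X := by
  have e := h.w_swap o X X
  rw [h.w_ad, h.add_w o X X] at e
  exact (h.inj o e).symm
theorem w_triv (X z : Q) : h.w o X z = z := by
  have key : ∀ X z, h.ad o X z = h.ad o (h.w o X (h.w o z X)) (h.w o X z) := by
    intro X z
    rw [h.w_swap o X z, h.w_swap o z X, h.w_ad, h.w_ad, h.w_self]
  have i1 : ∀ X B, h.ad o (m X o) (h.ad o (m o X) B) = h.ad o X B := by
    intro X B
    have := h.one o X o B
    rw [h.za, h.az] at this; exact this.symm
  have e1 := key X z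
  have e2 := key (m o X) z
  rw [h.w_psi, h.w_psi, ← h.w_comm_psi, ← h.w_comm_psi] at e2
  have e3 := i1 X z
  have e4 := i1 (h.w o X (h.w o z X)) (h.w o X z)
  rw [← e1, ← e2, ← e3] at e4
  have e5 := h.inj' o e4
  have e6 : h.w o X (h.w o z X) = X := by
    have := congrArg (fun t => m o t) e5
    simpa only [h.ss] using this
  rw [e6] at e1
  exact (h.inj o e1).symm
theorem ad_comm (x y : Q) : h.ad o x y = h.ad o y x := by
  rw [h.add_w, h.w_triv]
theorem ad_ip (x y : Q) : h.ad o (h.J o x) (h.ad o x y) = y := h.w_triv o x y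
theorem ad_ip' (x y : Q) : h.ad o x (h.ad o (h.J o x) y) = y := by
  have := h.ad_ip o (h.J o x) y
  rwa [h.JJ] at this
/-- the central defect -/
def kk (X : Q) : Q := h.ad o (h.J o (m o X)) (m X o)
theorem J_phi (X : Q) : m (h.J o X) o = h.J o (m X o) := by simp only [J, h.ss, h.ss']
theorem J_psi (X : Q) : m o (h.J o X) = h.J o (m o X) := rfl
theorem k_aux (X A B : Q) :
    h.ad o (h.ad o (h.J o (m o X)) (h.ad o (m X o) A))
      (h.ad o (h.J o (m X o)) (h.ad o (m o X) B)) = h.ad o A B := by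
  have e := h.one o (h.J o X) (h.ad o (m o X) B) (h.ad o (m X o) A)
  rw [h.J_phi, h.J_psi, h.ad_comm o (h.ad o (m o X) B) , ← h.one, h.ad_ip] at e
  rw [e, h.ad_comm]
theorem k_tau (X A : Q) : h.ad o (h.J o (m o X)) (h.ad o (m X o) A) = h.ad o (h.kk o X) A := by
  have e := h.k_aux o X A o
  have e1 : h.ad o (h.J o (m X o)) (h.ad o (m o X) o) = h.J o (h.kk o X) := by
    rw [h.az, kk, h.J_ad, h.JJ, h.ad_comm]
  rw [e1, h.az, h.ad_comm] at e
  rw [← h.ad_ip' o (h.kk o X) (h.ad o (h.J o (m o X)) (h.ad o (m X o) A)), e]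
theorem k_tau' (X A : Q) : h.ad o (h.J o (m X o)) (h.ad o (m o X) A)
    = h.ad o (h.J o (h.kk o X)) A := by
  have e := h.k_aux o X o A
  have e1 : h.ad o (h.J o (m o X)) (h.ad o (m X o) o) = h.kk o X := by
    rw [h.az]; rfl
  rw [e1, h.za] at e
  rw [← h.ad_ip o (h.kk o X) (h.ad o (h.J o (m X o)) (h.ad o (m o X) A)), e]
theorem k_1 (X A B : Q) : h.ad o (h.ad o (h.kk o X) A) (h.ad o (h.J o (h.kk o X)) B)
    = h.ad o A B := by
  rw [← k_tau, ← k_tau', k_aux]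
theorem k_cen (X C P : Q) : h.ad o (h.kk o X) (h.ad o C P) = h.ad o (h.ad o (h.kk o X) C) P := by
  have a1 : ∀ A B, h.ad o (h.ad o (h.kk o X) A) B = h.ad o A (h.ad o (h.kk o X) B) := by
    intro A B
    have := h.k_1 o X A (h.ad o (h.kk o X) B)
    rwa [h.ad_ip] at this
  have a2 : ∀ A B, h.ad o A (h.ad o (h.J o (h.kk o X)) B)
      = h.ad o (h.ad o (h.J o (h.kk o X)) A) B := by
    intro A B
    have := h.k_1 o X (h.ad o (h.J o (h.kk o X)) A) B
    rwa [h.ad_ip'] at this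
  rw [a1]
  have e := a1 (h.J o C) (h.ad o (h.ad o (h.J o (h.kk o X)) C) (h.ad o (h.kk o X) P))
  have e2 : h.ad o (h.kk o X) (h.J o C) = h.J o (h.ad o (h.J o (h.kk o X)) C) := by
    rw [h.J_ad, h.JJ]
  rw [e2, h.ad_ip, ← a2, h.ad_ip] at e
  have e3 := congrArg (fun t => h.ad o C t) e
  simp only [h.ad_ip'] at e3
  exact e3.symm
theorem phi_eq (X : Q) : m X o = h.ad o (h.kk o X) (m o X) := by
  rw [h.ad_comm, kk, h.ad_ip']
theorem X_eq (X : Q) : X = h.ad o (h.kk o X) (h.ad o (m o X) (m o X)) := by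
  rw [h.k_cen, ← h.phi_eq, ← h.m_eq, h.idem]
theorem law (u A B : Q) : h.ad o (h.ad o u u) (h.ad o A B) = h.ad o (h.ad o u A) (h.ad o u B) := by
  obtain ⟨X, rfl⟩ : ∃ X, m o X = u := ⟨m u o, h.ss _ _⟩
  have e := h.one o X A B
  rw [h.phi_eq o X, ← h.k_cen, ← h.k_cen] at e
  nth_rw 1 [h.X_eq o X] at e
  rw [← h.k_cen] at e
  exact h.inj o e

/-- The loop structure. -/
@[reducible]
def cml : CML Q where
  add := h.ad o
  zero := o
  neg := h.J o
  comm := h.ad_comm o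
  zadd := h.za o
  ip := h.ad_ip o
  negadd := h.J_ad o
  law := h.law o
end DM

/-- Central elements. -/
def Cen {Q : Type} [CML Q] (z : Q) : Prop := ∀ x y : Q, z + (x + y) = (z + x) + y

theorem DM.exists_cml {Q : Type} {m : Q → Q → Q} (h : DM m) (o : Q) :
    ∃ (_ : CML Q) (f : Q → Q), (∀ x y, f (x + y) = f x + f y) ∧
      (∀ x y, m x y = (x + -f x) + f y) ∧ (∀ x, x + f (f x) = f x) ∧
      (∀ x, ∃ k, Cen k ∧ x = k + (f x + f x)) := by
  refine ⟨h.cml o, fun x => m o x, h.psi_ad o, fun x y => ?_, fun x => ?_, fun x => ?_⟩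
  · change m x y = h.ad o (h.ad o x (h.J o (m o x))) (m o y)
    have e : h.ad o x (h.J o (m o x)) = m x o := by
      conv_lhs => rw [h.ad_comm]
      have := h.ad_ip o (m o x) (m x o)
      rw [h.ad_comm o (m o x), ← h.m_eq, h.idem] at this
      exact this
    rw [e, ← h.m_eq]
  · change h.ad o x (m o (m o x)) = m o x
    have := congrArg (fun t => m o t) (h.m_eq o x x)
    simp only [h.idem] at this
    rw [h.psi_ad, h.ss] at this
    exact this.symm
  · exact ⟨h.kk o x, h.k_cen o x, h.X_eq o x⟩


namespace CML
variable {Q : Type} [CML Q]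

theorem addz (x : Q) : x + 0 = x := by rw [comm, zadd]
theorem neg_add_self (x : Q) : -x + x = 0 := by
  have := ip x 0; rwa [addz] at this
theorem add_neg_self (x : Q) : x + -x = 0 := by rw [comm, neg_add_self]
theorem nn (x : Q) : - -x = x := by
  have := ip (-x) x
  rwa [neg_add_self, addz] at this
theorem ip' (x y : Q) : x + (-x + y) = y := by
  have := ip (-x) y
  rwa [nn] at this
theorem cancel {x y z : Q} (h : x + y = x + z) : y = z := by
  rw [← ip x y, h, ip]
theorem negz : -(0 : Q) = 0 := by
  have := neg_add_self (0 : Q); rwa [addz] at this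
theorem eq_neg {x y : Q} (h : x + y = 0) : y = -x := by
  rw [← ip x y, h, addz]
theorem sq (x y : Q) : x + (x + y) = (x + x) + y := by
  have := law x 0 y; rw [zadd, addz] at this; exact this.symm
theorem law2 (x A B : Q) : x + (x + (A + B)) = (x + A) + (x + B) := by rw [sq, law]
theorem key (x C D : Q) : x + (C + D) = (x + (x + C)) + (-x + D) := by
  have h := law2 x (C + D) (-D)
  have e : (C + D) + -D = C := by rw [comm, comm C D]; exact ip D C
  rw [e] at h
  rw [h, comm _ (-x + D), comm (x + (C + D))]
  have := ip (x + -D) (x + (C + D))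
  rw [negadd, nn] at this
  exact this.symm
theorem three_aux (x A B : Q) : x + (x + (x + (A + B))) = (x + (x + (x + A))) + B := by
  rw [law2 x A B, key x, ip]
theorem three_add (x B : Q) : x + (x + (x + B)) = (x + (x + x)) + B := by
  have := three_aux x 0 B; rwa [zadd, addz] at this
theorem three_cen (x : Q) : Cen (x + (x + x)) := by
  intro A B
  rw [← three_add, three_aux, three_add]
theorem cen_left {z : Q} (h : Cen z) (x y : Q) : x + (z + y) = z + (x + y) := by
  rw [comm x, ← h, comm x]
theorem cen_right {z : Q} (h : Cen z) (x y : Q) : x + (y + z) = (x + y) + z := by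
  rw [comm y, cen_left h, comm]
theorem mid (x A R : Q) : x + (A + (x + R)) = (x + (x + A)) + R := by
  rw [key, ip]
theorem split (x A R : Q) : (x + A) + R = x + (x + (A + (-x + R))) := by
  rw [law2, ip']

/-- inner mapping -/
def L (x y z : Q) : Q := -(x + y) + (x + (y + z))
/-- associating triples -/
def Asc (x y z : Q) : Prop := x + (y + z) = (x + y) + z

theorem L_spec (x y z : Q) : x + (y + z) = (x + y) + L x y z := by rw [L, ip']
theorem Asc_iff (x y z : Q) : Asc x y z ↔ L x y z = z := by
  constructor
  · intro h; rw [L, h, ip]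
  · intro h; rw [Asc, L_spec, h]
theorem L_zero (x y : Q) : L x y 0 = 0 := by rw [L, addz, neg_add_self]
theorem L_add (x y A B : Q) : L x y (A + B) = L x y A + L x y B := by
  have h : ∀ A B : Q, L x y A + L x y B =
      -(x + y) + (-(x + y) + (x + (x + (y + (y + (A + B)))))) := by
    intro A B
    simp only [L]; rw [← law2, ← law2, ← law2]
  have h1 := h (A + B) 0
  rw [L_zero, addz, addz] at h1
  rw [h1, h]
theorem L_neg (x y A : Q) : L x y (-A) = -L x y A := by
  apply eq_neg
  rw [← L_add, add_neg_self, L_zero]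
theorem L_fst (x y : Q) : L x y x = x := by
  rw [L, comm y x, comm x (x + y), ip]
theorem L_snd (x y : Q) : L x y y = y := by
  have e : x + (y + y) = (x + y) + y := by rw [comm, ← sq, comm x y, comm]
  rw [L, e, ip]
theorem L_cen {z : Q} (h : Cen z) (x y : Q) : L x y z = z := by
  rw [← Asc_iff, Asc, comm y z, comm x, ← h, comm z, comm x y]

/-- left translation as a permutation -/
def P (x : Q) : Equiv.Perm Q where
  toFun y := x + y
  invFun y := -x + y
  left_inv := ip x
  right_inv := ip' x

theorem P_apply (x y : Q) : P x y = x + y := rfl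
theorem P_neg (x : Q) : P (-x) = (P x)⁻¹ := by
  ext y; rfl
theorem P_split (x A : Q) : P (x + A) = P x * P x * P A * (P x)⁻¹ := by
  ext R; rw [← P_neg]; exact split x A R
theorem P_mid (x A : Q) : P x * P A * P x = P ((x + x) + A) := by
  ext R; rw [← sq]; exact mid x A R
theorem P_cube (x : Q) (g : Q) : P x * P x * P x * P g = P g * (P x * P x * P x) := by
  have e : P x * P x * P x = P (x + (x + x)) := by
    ext R; exact three_add x R
  rw [e]; ext R
  change (x + (x + x)) + (g + R) = g + ((x + (x + x)) + R)
  rw [cen_left (three_cen x)]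

/-- inner mapping as a permutation -/
def Lp (x y : Q) : Equiv.Perm Q := (P (x + y))⁻¹ * P x * P y
theorem Lp_apply (x y z : Q) : Lp x y z = L x y z := rfl
theorem Lp_eq (x y : Q) : Lp x y = P x * (P y)⁻¹ * (P x)⁻¹ * P y := by
  rw [Lp, P_split]; group
theorem Lp_conj (x y z : Q) : Lp x y * P z = P (L x y z) * Lp x y := by
  ext R; exact L_add x y z R
theorem Lp_comm1 (x y : Q) : Lp x y * P x = P x * Lp x y := by
  rw [Lp_conj, L_fst]
theorem Lp_comm2 (x y : Q) : Lp x y * P y = P y * Lp x y := by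
  rw [Lp_conj, L_snd]

theorem grp1 {G : Type} [Group G] (x y c : G) (h : c = x * y⁻¹ * x⁻¹ * y) (h1 : c * x = x * c)
    (h2 : c * y = y * c) : y * x⁻¹ * y⁻¹ * x = c⁻¹ := by
  have h1' : Commute c⁻¹ x := (show Commute c x from h1).inv_left
  have h2' : Commute c⁻¹ y := (show Commute c y from h2).inv_left
  have e : c⁻¹ = y * (x⁻¹ * c⁻¹ * x) * y⁻¹ := by
    rw [mul_assoc x⁻¹, h1'.eq, inv_mul_cancel_left, ← h2'.eq, mul_inv_cancel_right]
  rw [e, h]; group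
theorem grp2 {G : Type} [Group G] (x y c : G) (h : c = x * y⁻¹ * x⁻¹ * y)
    (h2 : c * y = y * c) : x * y * x⁻¹ * y⁻¹ = c⁻¹ := by
  have : y * c * y⁻¹ = c := by rw [← h2]; group
  rw [← this, h]; group
theorem grp3 {G : Type} [Group G] (x y c : G) (h : c = x * y⁻¹ * x⁻¹ * y) (h1 : c * x = x * c)
    (h3 : x * x * x * y = y * (x * x * x)) : c * c * c = 1 := by
  have h1' : Commute c⁻¹ x := (show Commute c x from h1).inv_left
  have e : y⁻¹ * x * y = c⁻¹ * x := by rw [h]; group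
  have e2 : y⁻¹ * (x * x * x * y) = (c⁻¹ * x) ^ 3 := by rw [← e, pow_succ, pow_two]; group
  rw [h3, h1'.mul_pow] at e2
  have e3 : c⁻¹ ^ 3 = 1 := by
    have : x * x * x = x ^ 3 := by rw [pow_succ, pow_two]
    rw [this, inv_mul_cancel_left] at e2
    exact (mul_eq_right.mp e2.symm)
  have e4 : c ^ 3 = 1 := by rwa [inv_pow, inv_eq_one] at e3
  rw [← e4, pow_succ, pow_two]
theorem Lp_swap (x y : Q) : Lp y x = (Lp x y)⁻¹ := by
  rw [Lp_eq y x]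
  exact grp1 _ _ _ (Lp_eq x y) (Lp_comm1 x y) (Lp_comm2 x y)
theorem Lp_neg2 (x y : Q) : Lp x (-y) = (Lp x y)⁻¹ := by
  rw [Lp_eq x (-y), P_neg, inv_inv]
  exact grp2 _ _ _ (Lp_eq x y) (Lp_comm2 x y)
theorem Lp_neg1 (x y : Q) : Lp (-x) y = (Lp x y)⁻¹ := by
  rw [Lp_swap y, Lp_neg2, Lp_swap x y, inv_inv]
theorem Lp_three (x y : Q) : Lp x y * Lp x y * Lp x y = 1 := 
  grp3 _ _ _ (Lp_eq x y) (Lp_comm1 x y) (P_cube x y)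
end CML


namespace CML
variable {Q : Type} [CML Q]

theorem conj_comm (y t : Q) :
    P y * ((P t)⁻¹ * P y * P t) = ((P t)⁻¹ * P y * P t) * P y := by
  have h := Lp_comm1 y t
  rw [Lp_eq] at h
  have h' : Commute ((P t)⁻¹ * (P y)⁻¹ * P t) (P y) := by
    have e : (P t)⁻¹ * (P y)⁻¹ * P t = (P y)⁻¹ * (P y * (P t)⁻¹ * (P y)⁻¹ * P t) := by group
    rw [e]
    exact (Commute.refl (P y)).inv_left.mul_left h
  have h2 := h'.inv_left
  have e : ((P t)⁻¹ * (P y)⁻¹ * P t)⁻¹ = (P t)⁻¹ * P y * P t := by group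
  rw [e] at h2
  exact h2.symm

theorem grp4 {G : Type} [Group G] (p q r c : G) (h : c = r * q * r⁻¹ * q⁻¹) (h1 : Commute c r)
    (h2 : Commute c q)
    (h3 : q * (r * p⁻¹ * r * q * (r⁻¹ * p * r⁻¹)) = (r * p⁻¹ * r * q * (r⁻¹ * p * r⁻¹)) * q) :
    p * (q * (c⁻¹ * p⁻¹ * c) * q) * p = q * (c * p * c⁻¹) * q := by
  have e1 : r * q = c * q * r := by rw [h]; group
  have e2 : q * r = c⁻¹ * (r * q) := by rw [e1]; group
  have e3 : r⁻¹ * (q * r) = c⁻¹ * q := by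
    rw [e2, ← mul_assoc, ← h1.inv_inv.eq]; group
  have e4 : (c⁻¹ * q) * (p⁻¹ * (c * q) * p) = (p⁻¹ * (c * q) * p) * (c⁻¹ * q) := by
    have e5 : c * q = r * q * r⁻¹ := by rw [e1]; group
    rw [← e3, e5]
    have := congrArg (fun t => r⁻¹ * t * r) h3
    calc _ = r⁻¹ * (q * (r * p⁻¹ * r * q * (r⁻¹ * p * r⁻¹))) * r := by group
      _ = _ := by rw [this]; group
  have e6 : c⁻¹ * q = q * c⁻¹ := h2.inv_left.eq
  calc p * (q * (c⁻¹ * p⁻¹ * c) * q) * p = p * ((q * c⁻¹) * (p⁻¹ * (c * q) * p)) := by group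
    _ = p * ((p⁻¹ * (c * q) * p) * (c⁻¹ * q)) := by rw [← e6, e4]
    _ = (c * q) * p * (c⁻¹ * q) := by group
    _ = q * (c * p * c⁻¹) * q := by rw [h2.eq]; group

theorem Lp_inv_apply (x y z : Q) : (Lp x y)⁻¹ z = L y x z := by
  rw [← Lp_swap]; rfl
theorem Lp_conj' (x y z : Q) : Lp x y * P z * (Lp x y)⁻¹ = P (L x y z) := by
  rw [Lp_conj, mul_inv_cancel_right]

theorem T2eq (x y z : Q) : (x + x) + ((y + y) + -L z y x) = (y + y) + L z (-y) x := by
  have hc : Lp z (-y) = P z * P y * (P z)⁻¹ * (P y)⁻¹ := by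
    rw [Lp_eq, P_neg, inv_inv]
  have h1 := Lp_comm1 z (-y)
  have h2 : Commute (Lp z (-y)) (P y) := by
    have := Lp_comm2 z (-y)
    rw [P_neg] at this
    exact Commute.inv_right_iff.mp this
  have h3 := conj_comm y ((-z + -z) + x)
  rw [← P_mid, P_neg] at h3
  have h4 := grp4 (P x) (P y) (P z) _ hc h1 h2 (by
    convert h3 using 2
    · group
    · group)
  rw [Lp_conj', Lp_neg2, inv_inv, ← P_neg, Lp_conj', L_neg, P_mid, P_mid, P_mid] at h4
  have h5 := congrArg (fun g : Equiv.Perm Q => g 0) h4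
  simpa only [P_apply, addz] using h5

theorem grp5 {Q : Type} (M : Equiv.Perm Q) (h : M * M * M = 1) (w : Q) (h2 : M (M w) = M⁻¹ (M⁻¹ w)) :
    M w = w := by
  have h3 : ∀ t, M (M (M t)) = t := fun t => by
    have := congrArg (fun g : Equiv.Perm Q => g t) h
    simpa using this
  have h4 : ∀ t, M⁻¹ t = M (M t) := fun t => by
    rw [Equiv.Perm.inv_eq_iff_eq, h3]
  rw [h4, h4, h3] at h2
  exact M.injective h2

theorem T2M (X Y w w' : Q) (h : X + (Y + w) = Y + (X + w')) : w' = L X Y (L X Y w) := by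
  rw [L_spec, L_spec Y X, comm Y X] at h
  have h := cancel h
  rw [h]
  have : L Y X w' = (Lp X Y)⁻¹ w' := by rw [Lp_inv_apply]
  rw [this, ← Lp_apply]; simp

theorem T2ab (x y z : Q) : L (x + x) (y + y) (L z y x) = L z y x ∧
    L z (-y) x = (x + x) + -L z y x := by
  have a1 := T2eq x y z
  have a2 := T2eq x (-y) (-z)
  have e1 : L (-z) (- -y) x = L z (-y) x := by
    rw [← Lp_apply, ← Lp_apply, Lp_neg1, Lp_neg2, Lp_neg2, inv_inv]
  have e2 : L (-z) (-y) x = L z y x := by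
    rw [← Lp_apply, ← Lp_apply, Lp_neg1, Lp_neg2, inv_inv]
  rw [e1, e2] at a2
  rw [← ip' (x + x) (L z (-y) x)] at a1 a2
  have b1 := T2M _ _ _ _ a1
  have b2 := T2M _ _ _ _ a2
  rw [b1] at b2
  have e3 : ∀ w, L (x + x) (-y + -y) w = (Lp (x + x) (y + y))⁻¹ w := by
    intro w; rw [← negadd, ← Lp_neg2]; rfl
  rw [e3, e3] at b2
  have b3 := grp5 _ (Lp_three _ _) _ b2
  rw [Lp_apply] at b3
  rw [b3, b3] at b1
  constructor
  · rw [L_neg] at b3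
    have := congrArg (fun t => -t) b3
    simpa only [nn] using this
  · rw [← b1, ip']

theorem Asc_swap12 {x y z : Q} (h : Asc x y z) : Asc y x z := by
  rw [Asc_iff] at h ⊢
  rw [← Lp_inv_apply, Equiv.Perm.inv_eq_iff_eq]; exact h.symm
theorem Asc_swap13 {x y z : Q} (h : Asc x y z) : Asc z y x := by
  rw [Asc] at h ⊢
  rw [comm z, comm y x, ← h, comm, comm z y]
theorem Asc_swap23 {x y z : Q} (h : Asc x y z) : Asc x z y :=
  Asc_swap12 (Asc_swap13 (Asc_swap12 h))
theorem Asc_rot {x y z : Q} (h : Asc x y z) : Asc y z x := Asc_swap23 (Asc_swap12 h)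
theorem Asc_rot' {x y z : Q} (h : Asc x y z) : Asc z x y := Asc_rot (Asc_rot h)
theorem Asc_self (x y : Q) : Asc x y x := (Asc_iff _ _ _).2 (L_fst x y)
theorem Asc_self' (x y : Q) : Asc x y y := (Asc_iff _ _ _).2 (L_snd x y)
theorem Asc_self'' (x y : Q) : Asc x x y := Asc_swap23 (Asc_self x y)

/-- Subloops containing the centre. -/
structure IsSub (S : Set Q) : Prop where
  cen : ∀ z, Cen z → z ∈ S
  add : ∀ x ∈ S, ∀ y ∈ S, x + y ∈ S
  neg : ∀ x ∈ S, -x ∈ S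

/-- Generated subloop. -/
def cl (X : Set Q) : Set Q := {x | ∀ S : Set Q, IsSub S → X ⊆ S → x ∈ S}

theorem cl_sub (X : Set Q) : IsSub (cl X) where
  cen z hz := fun _ hS _ => hS.cen z hz
  add x hx y hy := fun S hS h => hS.add x (hx S hS h) y (hy S hS h)
  neg x hx := fun S hS h => hS.neg x (hx S hS h)
theorem sub_cl (X : Set Q) : X ⊆ cl X := fun _ hx _ _ h => h hx
theorem cl_le {X S : Set Q} (hS : IsSub S) (h : X ⊆ S) : cl X ⊆ S := fun _ hx => hx S hS h
theorem IsSub.inter {S T : Set Q} (hS : IsSub S) (hT : IsSub T) : IsSub (S ∩ T) where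
  cen z hz := ⟨hS.cen z hz, hT.cen z hz⟩
  add x hx y hy := ⟨hS.add x hx.1 y hy.1, hT.add x hx.2 y hy.2⟩
  neg x hx := ⟨hS.neg x hx.1, hT.neg x hx.2⟩

/-- Fixed subloop of an inner mapping. -/
def Fx (x y : Q) : Set Q := {t | Asc x y t}
theorem Fx_sub (x y : Q) : IsSub (Fx x y) where
  cen z hz := (Asc_iff _ _ _).2 (L_cen hz x y)
  add s hs t ht := by
    have hs := (Asc_iff _ _ _).1 hs
    have ht := (Asc_iff _ _ _).1 ht
    exact (Asc_iff _ _ _).2 (by rw [L_add, hs, ht])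
  neg s hs := by
    have hs := (Asc_iff _ _ _).1 hs
    exact (Asc_iff _ _ _).2 (by rw [L_neg, hs])

theorem half_mem {S : Set Q} (hS : IsSub S) {x : Q} (h : x + x ∈ S) : x ∈ S := by
  have h1 := hS.add _ (hS.neg _ h) _ (hS.cen _ (three_cen x))
  rwa [comm x (x + x), ip] at h1
theorem sub_zero {S : Set Q} (hS : IsSub S) : (0 : Q) ∈ S :=
  hS.cen _ (fun x y => by rw [zadd, zadd])
theorem sub_left {S : Set Q} (hS : IsSub S) {x y : Q} (hx : x ∈ S) (h : x + y ∈ S) : y ∈ S := by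
  have := hS.add _ (hS.neg _ hx) _ h
  rwa [ip] at this
theorem sub_right {S : Set Q} (hS : IsSub S) {x y : Q} (hx : y ∈ S) (h : x + y ∈ S) : x ∈ S := by
  rw [comm] at h; exact sub_left hS hx h
theorem sub_neg {S : Set Q} (hS : IsSub S) {x : Q} (h : -x ∈ S) : x ∈ S := by
  rw [← nn x]; exact hS.neg _ h

/-- the associator -/
def u (x y z : Q) : Q := -x + L y z x
theorem u_spec (x y z : Q) : L y z x = x + u x y z := by rw [u, ip']
theorem u_zero_iff (x y z : Q) : u x y z = 0 ↔ Asc x y z := by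
  constructor
  · intro h
    have e := u_spec x y z
    rw [h, addz] at e
    exact Asc_rot' ((Asc_iff _ _ _).2 e)
  · intro h
    have := (Asc_iff _ _ _).1 (Asc_rot h)
    rw [u, this, neg_add_self]

theorem Asc_xyL (x y z : Q) : Asc x y (L z y x) := by
  have h := (Asc_iff _ _ _).2 (T2ab x y z).1
  have h1 : x + x ∈ Fx (y + y) (L z y x) := Asc_rot h
  have h2 : Asc (y + y) (L z y x) x := half_mem (Fx_sub _ _) h1
  have h3 : y + y ∈ Fx (L z y x) x := Asc_rot h2
  have h4 : Asc (L z y x) x y := half_mem (Fx_sub _ _) h3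
  exact Asc_rot h4
theorem u_xz (x y z : Q) : Asc x z (u x y z) := by
  have h := Asc_xyL x z y
  exact (Fx_sub x z).add _ ((Fx_sub x z).neg _ (Asc_self x z)) _ h
theorem L_swap_neg (x y z : Q) : L x (-y) z = L y x z := by
  rw [← Lp_apply, ← Lp_apply, Lp_neg2, Lp_swap x y]
theorem u_xy (x y z : Q) : Asc x y (u x y z) := by
  have h := Asc_xyL x (-y) z
  rw [L_swap_neg] at h
  have h1 : -y ∈ Fx x (L y z x) := Asc_swap23 h
  have h2 : Asc x (L y z x) y := sub_neg (Fx_sub _ _) h1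
  exact (Fx_sub x y).add _ ((Fx_sub x y).neg _ (Asc_self x y)) _ (Asc_swap23 h2)
theorem flip_eq {a b s : Q} (h : a = s + -b) : b = s + -a := by
  rw [h, negadd, nn, ip']
theorem u_yz (x y z : Q) : Asc y z (u x y z) := by
  have h := (T2ab x z y).2
  rw [L_swap_neg] at h
  have hi : ∀ t, L y z (L z y t) = t := fun t => by
    rw [← Lp_inv_apply y z]; exact (Lp y z).apply_symm_apply t
  have h2 := congrArg (L y z) h
  rw [hi, L_add, L_add, L_neg] at h2
  rw [Asc_iff, u, L_add, L_neg]
  have h3 : L y z (L y z x) = L y z x + (L y z x + -x) := by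
    rw [sq]; exact flip_eq h2
  rw [h3, ip, comm]
theorem u_three (x y z : Q) : u x y z + (u x y z + u x y z) = 0 := by
  have h := Lp_three y z
  have h := congrArg (fun g : Equiv.Perm Q => g x) h
  simp only [Equiv.Perm.mul_apply, Equiv.Perm.one_apply, Lp_apply] at h
  have hu := (Asc_iff _ _ _).1 (u_yz x y z)
  rw [u_spec x, L_add, hu, u_spec x, L_add, L_add, hu, u_spec x, comm x, comm _ (u x y z),
    comm _ (u x y z), three_add, comm] at h
  have := ip x (u x y z + (u x y z + u x y z))
  rw [h, neg_add_self] at this; exact this.symm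
end CML


namespace CML
variable {Q : Type} [CML Q]

/-- relative centre -/
def Zof (S : Set Q) : Set Q := {s | s ∈ S ∧ ∀ t ∈ S, ∀ t' ∈ S, Asc s t t'}
theorem Zof_sub {S : Set Q} (hS : IsSub S) : IsSub (Zof S) where
  cen z hz := ⟨hS.cen z hz, fun t _ t' _ => Asc_rot' ((Fx_sub t t').cen z hz)⟩
  add x hx y hy := ⟨hS.add _ hx.1 _ hy.1, fun t ht t' ht' => Asc_rot'
    ((Fx_sub t t').add x (Asc_rot (hx.2 t ht t' ht')) y (Asc_rot (hy.2 t ht t' ht')))⟩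
  neg x hx := ⟨hS.neg _ hx.1, fun t ht t' ht' => Asc_rot'
    ((Fx_sub t t').neg x (Asc_rot (hx.2 t ht t' ht')))⟩
theorem cl3_le {S : Set Q} (hS : IsSub S) {x y z : Q} (hx : x ∈ S) (hy : y ∈ S) (hz : z ∈ S) :
    cl {x, y, z} ⊆ S := cl_le hS (by
  intro t ht
  rcases ht with rfl | rfl | rfl <;> assumption)
theorem mem3_1 (x y z : Q) : x ∈ cl {x, y, z} := sub_cl _ (by simp)
theorem mem3_2 (x y z : Q) : y ∈ cl {x, y, z} := sub_cl _ (by simp)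
theorem mem3_3 (x y z : Q) : z ∈ cl {x, y, z} := sub_cl _ (by simp)
theorem u_mem_sub {S : Set Q} (hS : IsSub S) {x y z : Q} (hx : x ∈ S) (hy : y ∈ S) (hz : z ∈ S) :
    u x y z ∈ S := by
  refine hS.add _ (hS.neg _ hx) _ (hS.add _ (hS.neg _ (hS.add _ hy _ hz)) _ ?_)
  exact hS.add _ hy _ (hS.add _ hz _ hx)
theorem L_mem {S : Set Q} (hS : IsSub S) {x y z : Q} (hx : x ∈ S) (hy : y ∈ S) (hz : z ∈ S) :
    L x y z ∈ S := by
  exact hS.add _ (hS.neg _ (hS.add _ hx _ hy)) _ (hS.add _ hx _ (hS.add _ hy _ hz))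
theorem u_Zof (x y z : Q) : u x y z ∈ Zof (cl {x, y, z}) := by
  have hS := cl_sub {x, y, z}
  have h1 : cl {x, y, z} ⊆ Fx (u x y z) x := cl3_le (Fx_sub _ _) (Asc_self' _ _)
    (Asc_rot' (u_xy x y z)) (Asc_rot' (u_xz x y z))
  have h2 : cl {x, y, z} ⊆ Fx (u x y z) y := cl3_le (Fx_sub _ _)
    (Asc_swap23 (Asc_rot' (u_xy x y z))) (Asc_self' _ _) (Asc_rot' (u_yz x y z))
  have h3 : cl {x, y, z} ⊆ Fx (u x y z) z := cl3_le (Fx_sub _ _)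
    (Asc_swap23 (Asc_rot' (u_xz x y z))) (Asc_swap23 (Asc_rot' (u_yz x y z))) (Asc_self' _ _)
  refine ⟨u_mem_sub hS (mem3_1 x y z) (mem3_2 x y z) (mem3_3 x y z), fun t ht t' ht' => ?_⟩
  have h4 : cl {x, y, z} ⊆ Fx (u x y z) t := cl3_le (Fx_sub _ _)
    (Asc_swap23 (h1 ht)) (Asc_swap23 (h2 ht)) (Asc_swap23 (h3 ht))
  exact h4 ht'

theorem trans_ncard (d : Q) (S : Set Q) : ((fun s => d + s) '' S).ncard = S.ncard :=
  Set.ncard_image_of_injective S (fun _ _ h => cancel h)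
theorem disj1 {S : Set Q} (hS : IsSub S) {d : Q} (hd : d ∉ S) :
    Disjoint S ((fun s => d + s) '' S) := by
  rw [Set.disjoint_left]
  rintro x hx ⟨s, hs, rfl⟩
  exact hd (sub_right hS hs hx)
theorem disj2 {S : Set Q} (hS : IsSub S) {d : Q} (hd : d ∉ S) :
    Disjoint (S ∪ (fun s => d + s) '' S) ((fun s => -d + s) '' S) := by
  rw [Set.disjoint_left]
  rintro x hx ⟨s, hs, rfl⟩
  rcases hx with hx | ⟨s', hs', e⟩
  · exact hd (sub_neg hS (sub_right hS hs hx))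
  · simp only at e
    have e2 := congrArg (fun t => d + t) e
    simp only [ip', sq] at e2
    rw [← e2] at hs
    exact hd (half_mem hS (sub_right hS hs' hs))
theorem card3 [Finite Q] {S : Set Q} (hS : IsSub S) {d : Q} (hd : d ∉ S) :
    (S ∪ (fun s => d + s) '' S ∪ (fun s => -d + s) '' S).ncard = 3 * S.ncard := by
  rw [Set.ncard_union_eq (disj2 hS hd), Set.ncard_union_eq (disj1 hS hd), trans_ncard, trans_ncard]
  ring
theorem T3 [Finite Q] {S T : Set Q} (hS : IsSub S) (hT : IsSub T) (h : S ⊆ T) {d : Q} (hd : d ∉ S)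
    (hd' : d ∈ T) : 3 * S.ncard ≤ T.ncard := by
  rw [← card3 hS hd]
  apply Set.ncard_le_ncard _ T.toFinite
  rintro x ((hx | ⟨s, hs, rfl⟩) | ⟨s, hs, rfl⟩)
  · exact h hx
  · exact hT.add _ hd' _ (h hs)
  · exact hT.add _ (hT.neg _ hd') _ (h hs)
theorem T3' [Finite Q] {S : Set Q} (hS : IsSub S) (hc : Nat.card Q = 3 * S.ncard) {d : Q}
    (hd : d ∉ S) (x : Q) : x ∈ S ∨ -d + x ∈ S ∨ d + x ∈ S := by
  have h := card3 hS hd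
  rw [← hc, ← Set.ncard_univ] at h
  have h2 := Set.eq_of_subset_of_ncard_le (Set.subset_univ _) h.ge Set.finite_univ
  have hx : x ∈ (S ∪ (fun s => d + s) '' S ∪ (fun s => -d + s) '' S) := by rw [h2]; trivial
  rcases hx with (hx | ⟨s, hs, rfl⟩) | ⟨s, hs, rfl⟩
  · exact Or.inl hx
  · right; left; simpa only [ip] using hs
  · right; right; simpa only [ip'] using hs

/-- span of an element of exponent three -/
theorem u_ne_neg {x : Q} (h : x + (x + x) = 0) (h0 : x ≠ 0) : x ≠ -x := by
  intro e
  apply h0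
  nth_rw 2 [e] at h
  rwa [neg_add_self, addz] at h
theorem span_ncard {x : Q} (h : x + (x + x) = 0) (h0 : x ≠ 0) :
    ({0, x, -x} : Set Q).ncard = 3 := by
  rw [Set.ncard_eq_three]
  refine ⟨0, x, -x, h0.symm, ?_, u_ne_neg h h0, rfl⟩
  intro e; apply h0; rw [← nn x, ← e, negz]

theorem nonassoc_card [Finite Q] {T : Set Q} (hT : IsSub T) {x y z : Q} (hx : x ∈ T) (hy : y ∈ T)
    (hz : z ∈ T) (h : ¬ Asc x y z) : 27 * (Zof T).ncard ≤ T.ncard := by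
  have h0 := Zof_sub hT
  have hZx : Zof T ⊆ cl (Zof T ∪ {x}) := fun t ht => sub_cl _ (Or.inl ht)
  have hZy : Zof T ⊆ cl (Zof T ∪ {x, y}) := fun t ht => sub_cl _ (Or.inl ht)
  have a1 := T3 h0 (cl_sub (Zof T ∪ {x})) hZx (d := x) (fun hh => h (hh.2 y hy z hz))
    (sub_cl _ (by simp))
  have a2 : 3 * (cl (Zof T ∪ {x})).ncard ≤ (cl (Zof T ∪ {x, y})).ncard := by
    refine T3 (cl_sub _) (cl_sub _) (cl_le (cl_sub _) ?_) (d := y) ?_ (sub_cl _ (by simp))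
    · rintro t (ht | rfl)
      · exact hZy ht
      · exact sub_cl _ (by simp)
    · intro hh
      have : cl (Zof T ∪ {x}) ⊆ Fx x z := cl_le (Fx_sub _ _) (by
        rintro t (ht | rfl)
        · exact Asc_rot (ht.2 x hx z hz)
        · exact Asc_self _ _)
      exact h (Asc_swap23 (this hh))
  have a3 : 3 * (cl (Zof T ∪ {x, y})).ncard ≤ T.ncard := by
    refine T3 (cl_sub _) hT (cl_le hT ?_) (d := z) ?_ hz
    · rintro t (ht | rfl | rfl)
      · exact ht.1
      · exact hx
      · exact hy
    · intro hh
      have : cl (Zof T ∪ {x, y}) ⊆ Fx x y := cl_le (Fx_sub _ _) (by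
        rintro t (ht | rfl | rfl)
        · exact Asc_rot (ht.2 x hx y hy)
        · exact Asc_self _ _
        · exact Asc_self' _ _)
      exact h (this hh)
  omega

theorem span_le {S : Set Q} (hS : IsSub S) {x : Q} (hx : x ∈ S) : ({0, x, -x} : Set Q) ⊆ S := by
  rintro t (rfl | rfl | rfl)
  · exact sub_zero hS
  · exact hx
  · exact hS.neg _ hx

theorem small_sub [Finite Q] (hc : Nat.card Q = 243) {x y z : Q} (h : ¬ Asc x y z)
    (hne : cl {x, y, z} ≠ Set.univ) : (cl {x, y, z}).ncard = 81 ∧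
      Zof (cl {x, y, z}) = {0, u x y z, -u x y z} := by
  have hS := cl_sub {x, y, z}
  obtain ⟨d, hd⟩ := (Set.ne_univ_iff_exists_notMem _).1 hne
  have h1 := T3 hS (T := Set.univ) ⟨fun _ _ => trivial, fun _ _ _ _ => trivial, fun _ _ => trivial⟩
    (Set.subset_univ _) hd trivial
  rw [Set.ncard_univ, hc] at h1
  have h2 := nonassoc_card hS (mem3_1 x y z) (mem3_2 x y z) (mem3_3 x y z) h
  have h3 := span_ncard (u_three x y z) (fun e => h ((u_zero_iff x y z).1 e))
  have h4 := span_le (Zof_sub hS) (u_Zof x y z)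
  have h5 := Set.ncard_le_ncard h4 (Set.toFinite _)
  refine ⟨by omega, (Set.eq_of_subset_of_ncard_le h4 (by omega) (Set.toFinite _)).symm⟩
end CML


namespace CML
variable {Q : Type} [CML Q]

theorem univ_sub : IsSub (Set.univ : Set Q) :=
  ⟨fun _ _ => trivial, fun _ _ _ _ => trivial, fun _ _ => trivial⟩
theorem Cen_iff (z : Q) : Cen z ↔ z ∈ Zof (Set.univ : Set Q) :=
  ⟨fun h => ⟨trivial, fun x _ y _ => h x y⟩, fun h x y => h.2 x trivial y trivial⟩
theorem Cen_neg {z : Q} (h : Cen z) : Cen (-z) :=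
  (Cen_iff _).2 ((Zof_sub univ_sub).neg _ ((Cen_iff _).1 h))
theorem Cen_add {z w : Q} (h : Cen z) (h' : Cen w) : Cen (z + w) :=
  (Cen_iff _).2 ((Zof_sub univ_sub).add _ ((Cen_iff _).1 h) _ ((Cen_iff _).1 h'))
theorem Cen_zero : Cen (0 : Q) := fun x y => by rw [zadd, zadd]

theorem grow [Finite Q] (hc : Nat.card Q = 243) {S T : Set Q} (hS : IsSub S) (h81 : S.ncard = 81)
    (hT : IsSub T) (h : S ⊆ T) {d : Q} (hd : d ∉ S) (hd' : d ∈ T) (t : Q) : t ∈ T := by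
  have h1 := T3 hS hT h hd hd'
  have h2 := Set.eq_of_subset_of_ncard_le (Set.subset_univ T)
    (by rw [Set.ncard_univ]; omega) Set.finite_univ
  rw [h2]; trivial

/-- If `d` associates with all of `S` then it is central -/
theorem cen_of_grow [Finite Q] (hc : Nat.card Q = 243) {S : Set Q} (hS : IsSub S)
    (h81 : S.ncard = 81) {d f : Q} (hd : d ∉ S)
    (h1 : ∀ s ∈ S, ∀ s' ∈ S, Asc f s s') (h2 : ∀ s ∈ S, Asc f s d) : Cen f := by
  have a1 : ∀ s ∈ S, ∀ t, Asc f s t := fun s hs t =>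
    grow hc hS h81 (Fx_sub f s) (fun s' hs' => h1 s hs s' hs') hd (h2 s hs) t
  have a2 : ∀ t, Asc f d t := fun t =>
    grow hc hS h81 (Fx_sub f d) (fun s' hs' => Asc_swap23 (h2 s' hs')) hd (Asc_self' _ _) t
  intro x y
  exact grow hc hS h81 (Fx_sub f x) (fun s' hs' => Asc_swap23 (a1 s' hs' x)) hd
    (Asc_swap23 (a2 x)) y

theorem adj_aux {s : Q} (hs : Cen s) (d n : Q) : (d + s) + (n + -s) = d + n := by
  rw [comm d, ← hs, comm n, cen_left (Cen_neg hs), ip']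
theorem adj {e : Q} (he : Cen e) {x y c d : Q} (h1 : u c x y = e ∨ u c x y = -e)
    (h2 : u d x y = 0 ∨ u d x y = e ∨ u d x y = -e) :
    ∃ n, (n = 0 ∨ n = c ∨ n = -c) ∧ Asc x y (d + n) := by
  have e1 := u_spec c x y
  have e2 := u_spec d x y
  have e3 : L x y (-c) = -c + -u c x y := by rw [L_neg, e1, negadd]
  have hE : Cen (-e) := Cen_neg he
  have main : ∀ n, L x y n = n + -u d x y → Cen (u d x y) → Asc x y (d + n) := by
    intro n hn hh
    rw [Asc_iff, L_add, e2, hn, adj_aux hh]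
  rcases h2 with h2 | h2 | h2
  · refine ⟨0, Or.inl rfl, main _ ?_ ?_⟩
    · rw [h2, L_zero, negz, zadd]
    · rw [h2]; exact Cen_zero
  · rcases h1 with h1 | h1
    · exact ⟨-c, by simp, main _ (by rw [e3, h1, h2]) (by rwa [h2])⟩
    · exact ⟨c, by simp, main _ (by rw [e1, h1, h2]) (by rwa [h2])⟩
  · rcases h1 with h1 | h1
    · exact ⟨c, by simp, main _ (by rw [e1, h1, h2, nn]) (by rwa [h2])⟩
    · exact ⟨-c, by simp, main _ (by rw [e3, h1, h2]) (by rwa [h2])⟩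

theorem caseA [Finite Q] (hc : Nat.card Q = 243) {a b c : Q} (h : ¬ Asc a b c)
    (hne : cl {a, b, c} ≠ Set.univ) {z : Q} (hz : Cen z) (hz0 : z ≠ 0) : False := by
  obtain ⟨h81, hZ⟩ := small_sub hc h hne
  obtain ⟨d, hd⟩ := (Set.ne_univ_iff_exists_notMem _).1 hne
  have hS := cl_sub {a, b, c}
  set S := cl {a, b, c} with hSd
  set e := u a b c with hed
  have he : Cen e := by
    have : z ∈ Zof S := (Zof_sub hS).cen z hz
    rw [hZ] at this
    rcases this with rfl | rfl | rfl
    · exact absurd rfl hz0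
    · exact hz
    · rw [← nn e]; exact Cen_neg hz
  have e0 : e ≠ 0 := fun hh => h ((u_zero_iff _ _ _).1 hh)
  have hall : ∀ x y z, u x y z = 0 ∨ u x y z = e ∨ u x y z = -e := by
    intro x y z
    by_cases hA : Asc x y z
    · exact Or.inl ((u_zero_iff _ _ _).2 hA)
    · by_cases hU : cl {x, y, z} = Set.univ
      · have h1 := u_Zof x y z
        rw [hU, ← Cen_iff] at h1
        have h2 := (Zof_sub hS).cen _ h1
        rw [hZ] at h2; exact h2
      · obtain ⟨_, hZ'⟩ := small_sub hc hA hU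
        have h2 := (Zof_sub (cl_sub {x, y, z})).cen _ he
        rw [hZ'] at h2
        rcases h2 with h2 | h2 | h2
        · exact absurd h2 e0
        · exact Or.inr (Or.inl h2.symm)
        · right; right; rw [h2, nn]
  have hall' : ∀ x y z, ¬ Asc x y z → u x y z = e ∨ u x y z = -e := by
    intro x y z hA
    rcases hall x y z with h1 | h1
    · exact absurd ((u_zero_iff _ _ _).1 h1) hA
    · exact h1
  have ma := mem3_1 a b c
  have mb := mem3_2 a b c
  have mc := mem3_3 a b c
  have mm : ∀ {n t : Q}, t ∈ S → (n = 0 ∨ n = t ∨ n = -t) → n ∈ S := by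
    rintro n t ht (rfl | rfl | rfl)
    · exact sub_zero hS
    · exact ht
    · exact hS.neg _ ht
  obtain ⟨n1, hn1, f1⟩ := adj he (x := a) (y := b) (hall' c a b (fun hh => h (Asc_rot hh)))
    (hall d a b)
  obtain ⟨n2, hn2, f2⟩ := adj he (x := a) (y := c)
    (hall' b a c (fun hh => h (Asc_swap12 hh))) (hall (d + n1) a c)
  obtain ⟨n3, hn3, f3⟩ := adj he (x := b) (y := c) (hall' a b c h) (hall (d + n1 + n2) b c)
  have mul : ∀ {x y n t : Q}, Asc x y t → (n = 0 ∨ n = t ∨ n = -t) → Asc x y n := by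
    rintro x y n t ht (rfl | rfl | rfl)
    · exact sub_zero (Fx_sub x y)
    · exact ht
    · exact (Fx_sub x y).neg _ ht
  have g1 : Asc a b (d + n1 + n2 + n3) :=
    (Fx_sub a b).add _ ((Fx_sub a b).add _ f1 _ (mul (Asc_self' a b) hn2)) _
      (mul (Asc_self a b) hn3)
  have g2 : Asc a c (d + n1 + n2 + n3) :=
    (Fx_sub a c).add _ f2 _ (mul (Asc_self a c) hn3)
  have hf : d + n1 + n2 + n3 ∉ S := fun hh => hd (sub_right hS (mm mc hn1)
    (sub_right hS (mm mb hn2) (sub_right hS (mm ma hn3) hh)))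
  set f := d + n1 + n2 + n3
  have ka : S ⊆ Fx f a := cl3_le (Fx_sub _ _) (Asc_self' _ _) (Asc_rot' g1) (Asc_rot' g2)
  have kb : S ⊆ Fx f b := cl3_le (Fx_sub _ _) (Asc_swap23 (Asc_rot' g1)) (Asc_self' _ _)
    (Asc_rot' f3)
  have kc : S ⊆ Fx f c := cl3_le (Fx_sub _ _) (Asc_swap23 (Asc_rot' g2))
    (Asc_swap23 (Asc_rot' f3)) (Asc_self' _ _)
  have ks : ∀ s ∈ S, ∀ s' ∈ S, Asc f s s' := by
    intro s hs s' hs'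
    have : S ⊆ Fx f s := cl3_le (Fx_sub _ _) (Asc_swap23 (ka hs)) (Asc_swap23 (kb hs))
      (Asc_swap23 (kc hs))
    exact this hs'
  have := cen_of_grow hc hS h81 hf ks (fun s _ => Asc_self _ _)
  exact hf (hS.cen _ this)

theorem cen_three (hz : ∀ z : Q, Cen z → z = 0) (x : Q) : x + (x + x) = 0 := hz _ (three_cen x)

theorem caseB [Finite Q] (hc : Nat.card Q = 243) {a0 b0 c0 : Q} (h : ¬ Asc a0 b0 c0)
    (hne : cl {a0, b0, c0} ≠ Set.univ) (hz : ∀ z : Q, Cen z → z = 0) : False := by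
  obtain ⟨h81, hZ⟩ := small_sub hc h hne
  obtain ⟨d, hd⟩ := (Set.ne_univ_iff_exists_notMem _).1 hne
  have hS := cl_sub {a0, b0, c0}
  have heS := u_Zof a0 b0 c0
  set S := cl {a0, b0, c0} with hSd
  set e := u a0 b0 c0 with hed
  have e0 : e ≠ 0 := fun hh => h ((u_zero_iff _ _ _).1 hh)
  obtain ⟨a, haS, had⟩ : ∃ a ∈ S, ¬ Asc e a d := by
    by_contra hcon
    push Not at hcon
    exact e0 (hz _ (cen_of_grow hc hS h81 hd heS.2 hcon))
  obtain ⟨b, hb⟩ : ∃ b, b = u e a d := ⟨_, rfl⟩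
  have b0 : b ≠ 0 := fun hh => had ((u_zero_iff _ _ _).1 (hb ▸ hh))
  have hL : L a d e = e + b := by rw [hb]; exact u_spec e a d
  have hea : Asc e a b := hb ▸ u_xy e a d
  have hed' : Asc e d b := hb ▸ u_xz e a d
  have hadb : Asc a d b := hb ▸ u_yz e a d
  have hbS : b ∈ S := by
    by_contra hbS
    exact had (grow hc hS h81 (Fx_sub e a) (fun s hs => heS.2 a haS s hs) hbS hea d)
  obtain ⟨c, hcS, habc⟩ : ∃ c ∈ S, ¬ Asc a b c := by
    by_contra hcon
    push Not at hcon
    have haZ : a ∉ Zof S := by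
      rw [hZ]
      rintro (h1 | h1 | h1)
      · rw [h1] at had; exact had (Asc_swap23 (sub_zero (Fx_sub e d)))
      · rw [h1] at had; exact had (Asc_self'' _ _)
      · rw [h1] at had
        exact had (Asc_swap23 (((Fx_sub e d).neg _ (Asc_self e d))))
    obtain ⟨p, hp, q, hq, hpq⟩ : ∃ p ∈ S, ∃ q ∈ S, ¬ Asc a p q := by
      by_contra hcon'
      push Not at hcon'
      exact haZ ⟨haS, hcon'⟩
    let C : Set Q := {x | x ∈ S ∧ ∀ s ∈ S, Asc a x s}
    have hC : IsSub C :=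
      { cen := fun z hz => ⟨hS.cen z hz, fun s _ => Asc_swap23 ((Fx_sub a s).cen z hz)⟩
        add := fun x hx y hy => ⟨hS.add _ hx.1 _ hy.1, fun s hs => Asc_swap23 ((Fx_sub a s).add _
          (Asc_swap23 (hx.2 s hs)) _ (Asc_swap23 (hy.2 s hs)))⟩
        neg := fun x hx => ⟨hS.neg _ hx.1, fun s hs => Asc_swap23 ((Fx_sub a s).neg _
          (Asc_swap23 (hx.2 s hs)))⟩ }
    have hI := hS.inter (Fx_sub a p)
    have c1 : 3 * C.ncard ≤ (S ∩ Fx a p).ncard :=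
      T3 hC hI (fun x hx => ⟨hx.1, Asc_swap23 (hx.2 p hp)⟩) (d := p)
        (fun hh => hpq (hh.2 q hq)) ⟨hp, Asc_self' _ _⟩
    have c2 : 3 * (S ∩ Fx a p).ncard ≤ S.ncard :=
      T3 hI hS Set.inter_subset_left (d := q) (fun hh => hpq hh.2) hq
    have c3 : 3 ≤ (cl {b}).ncard := by
      rw [← span_ncard (cen_three hz b) b0]
      exact Set.ncard_le_ncard (span_le (cl_sub _) (sub_cl _ rfl)) (Set.toFinite _)
    have c4 : 3 * (cl {b}).ncard ≤ (cl {b, a}).ncard := by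
      refine T3 (cl_sub _) (cl_sub _) (cl_le (cl_sub _) ?_) (d := a) ?_ (sub_cl _ (by simp))
      · rintro t rfl; exact sub_cl _ (by simp)
      · intro hh
        have : cl {b} ⊆ Fx e d := cl_le (Fx_sub _ _) (by rintro t rfl; exact hed')
        exact had (Asc_swap23 (this hh))
    have c5 : 3 * (cl {b, a}).ncard ≤ C.ncard := by
      refine T3 (cl_sub _) hC (cl_le hC ?_) (d := e) ?_
        ⟨heS.1, fun s hs => Asc_swap12 (heS.2 a haS s hs)⟩
      · rintro t (rfl | rfl)
        · exact ⟨hbS, hcon⟩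
        · exact ⟨haS, fun s _ => Asc_self'' _ _⟩
      · intro hh
        have : cl {b, a} ⊆ Fx a d := cl_le (Fx_sub _ _) (by
          rintro t (rfl | rfl)
          · exact hadb
          · exact Asc_self _ _)
        exact had (Asc_rot' (this hh))
    omega
  have h3 : cl {a, b, c} = S := by
    have k1 : cl {a, b, c} ⊆ S := cl3_le hS haS hbS hcS
    have k2 : cl {a, b, c} ≠ Set.univ := fun hh => hd (k1 (hh ▸ trivial))
    exact Set.eq_of_subset_of_ncard_le k1 (by rw [(small_sub hc habc k2).1, h81]) (Set.toFinite _)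
  have h4 : ¬ Asc a c d := by
    intro hh
    have : S ⊆ Fx a d := by
      rw [← h3]; exact cl3_le (Fx_sub _ _) (Asc_self _ _) hadb (Asc_swap23 hh)
    exact had (Asc_rot' (this heS.1))
  have hF := cl_sub {a, c, d}
  have ma := mem3_1 a c d
  have mc := mem3_2 a c d
  have md := mem3_3 a c d
  have hFne : cl {a, c, d} ≠ Set.univ := by
    intro hh
    have h1 := u_Zof a c d
    rw [hh, ← Cen_iff] at h1
    exact h4 ((u_zero_iff _ _ _).1 (hz _ h1))
  have hF81 := (small_sub hc h4 hFne).1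
  have hbF : b ∉ cl {a, c, d} := by
    intro hh
    have k1 : S ⊆ cl {a, c, d} := by rw [← h3]; exact cl3_le hF ma hh mc
    have k2 := Set.eq_of_subset_of_ncard_le k1 (by rw [hF81, h81]) (Set.toFinite _)
    rw [k2] at hd
    exact hd md
  have heF : e ∉ cl {a, c, d} := by
    intro hh
    have := L_mem hF ma md hh
    rw [hL] at this
    exact hbF (sub_left hF hh this)
  have hLb := (Asc_iff _ _ _).1 hadb
  rcases T3' hF (by omega) hbF e with h5 | h5 | h5
  · exact heF h5
  · have := L_mem hF ma md h5
    rw [L_add, L_neg, hLb, hL, comm e, ip] at this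
    exact heF this
  · have := L_mem hF ma md h5
    rw [L_add, hLb, hL, comm e] at this
    exact hbF (sub_right hF h5 this)

theorem gen_univ [Finite Q] (hc : Nat.card Q = 243) {a b c : Q} (h : ¬ Asc a b c) :
    cl {a, b, c} = Set.univ := by
  by_contra hne
  by_cases hz : ∀ z : Q, Cen z → z = 0
  · exact caseB hc h hne hz
  · push Not at hz
    obtain ⟨z, hz, hz0⟩ := hz
    exact caseA hc h hne hz hz0
end CML


namespace CML
variable {Q : Type} [CML Q]

/-- multiples of an element of exponent three -/
def sm (e : Q) (i : ZMod 3) : Q := if i = 0 then 0 else if i = 1 then e else -e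
theorem sm_zero (e : Q) : sm e 0 = 0 := rfl
theorem sm_one (e : Q) : sm e 1 = e := rfl
theorem sm_two (e : Q) : sm e 2 = -e := rfl
theorem sm_cen {e : Q} (he : Cen e) (i : ZMod 3) : Cen (sm e i) := by
  unfold sm; split_ifs
  · exact Cen_zero
  · exact he
  · exact Cen_neg he
theorem sm_neg (e : Q) (i : ZMod 3) : sm e (-i) = -sm e i := by
  fin_cases i
  · exact negz.symm
  · rfl
  · exact (nn e).symm
theorem sm_add {e : Q} (h3 : e + (e + e) = 0) (i j : ZMod 3) : sm e (i + j) = sm e i + sm e j := by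
  have h2 : e + e = -e := eq_neg h3
  have h2' : -e + -e = e := by rw [← negadd, h2, nn]
  fin_cases i <;> fin_cases j
  · exact (zadd _).symm
  · exact (zadd _).symm
  · exact (zadd _).symm
  · exact (addz _).symm
  · exact h2.symm
  · exact (add_neg_self e).symm
  · exact (addz _).symm
  · exact (neg_add_self e).symm
  · exact h2'.symm
theorem sm_inj {e : Q} (h3 : e + (e + e) = 0) (h0 : e ≠ 0) {i j : ZMod 3} (h : sm e i = sm e j) :
    i = j := by
  have h1 : sm e (i + -j) = 0 := by rw [sm_add h3, sm_neg, h, add_neg_self]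
  have h2 : ∀ k : ZMod 3, sm e k = 0 → k = 0 := by
    intro k hk
    fin_cases k
    · rfl
    · exact absurd hk h0
    · exfalso; apply h0; rw [← nn e, show -e = 0 from hk, negz]
  have := h2 _ h1
  rwa [← sub_eq_add_neg, sub_eq_zero] at this

/-- determinant -/
def det3 (x1 x2 x3 y1 y2 y3 z1 z2 z3 : ZMod 3) : ZMod 3 :=
  x1 * (y2 * z3 - y3 * z2) - x2 * (y1 * z3 - y3 * z1) + x3 * (y1 * z2 - y2 * z1)

/-- Coordinates attached to a nonassociating triple. -/
structure Dat (e a b c : Q) (k1 k2 k3 : Q → ZMod 3) : Prop where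
  cen : Cen e
  three : e + (e + e) = 0
  ne : e ≠ 0
  add1 : ∀ x y, k1 (x + y) = k1 x + k1 y
  add2 : ∀ x y, k2 (x + y) = k2 x + k2 y
  add3 : ∀ x y, k3 (x + y) = k3 x + k3 y
  a1 : k1 a = 1
  a2 : k2 a = 0
  a3 : k3 a = 0
  b1 : k1 b = 0
  b2 : k2 b = 1
  b3 : k3 b = 0
  c1 : k1 c = 0
  c2 : k2 c = 0
  c3 : k3 c = 1
  gen : cl {a, b, c} = Set.univ
  asc : ∀ x y z, x + (y + z) = ((x + y) + z) +
    sm e (det3 (k1 x) (k2 x) (k3 x) (k1 y) (k2 y) (k3 y) (k1 z) (k2 z) (k3 z))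

/-- associator has coordinate `i` -/
def Hh (e x y z : Q) (i : ZMod 3) : Prop := L x y z = z + sm e i

theorem sum4 {s t : Q} (hs : Cen s) (ht : Cen t) (x y : Q) :
    (x + s) + (y + t) = (x + y) + (s + t) := by
  rw [comm x, ← hs, cen_right ht, cen_left hs]
theorem Hh_add {e : Q} (he : Cen e) (h3 : e + (e + e) = 0) {x y z z' : Q} {i i' : ZMod 3}
    (h : Hh e x y z i) (h' : Hh e x y z' i') : Hh e x y (z + z') (i + i') := by
  rw [Hh] at *
  rw [L_add, h, h', sum4 (sm_cen he i) (sm_cen he i'), sm_add h3]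
theorem Hh_neg {e x y z : Q} {i : ZMod 3} (h : Hh e x y z i) : Hh e x y (-z) (-i) := by
  rw [Hh] at *
  rw [L_neg, h, negadd, sm_neg]
theorem Hh_cen (e : Q) {x y z : Q} (hz : Cen z) : Hh e x y z 0 := by
  rw [Hh, L_cen hz, sm_zero, addz]
theorem Hh_12 {e : Q} (he : Cen e) {x y z : Q} {i : ZMod 3} (h : Hh e x y z i) :
    Hh e y x z (-i) := by
  have h1 : L y x (L x y z) = z := by
    rw [← Lp_inv_apply]; exact (Lp x y).symm_apply_apply z
  rw [Hh] at *
  rw [h, L_add, L_cen (sm_cen he i)] at h1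
  rw [sm_neg]
  nth_rw 2 [← h1]
  rw [comm _ (sm e i), comm, ip]
theorem Hh_13 {e : Q} (he : Cen e) {x y z : Q} {i : ZMod 3} (h : Hh e x y z i) :
    Hh e z y x (-i) := by
  rw [Hh] at *
  have h1 := L_spec x y z
  have h2 := L_spec z y x
  rw [h, cen_right (sm_cen he i)] at h1
  have h3 : (x + y) + z = -sm e i + (x + (y + z)) := by rw [h1, comm _ (sm e i), ip]
  rw [comm z (y + x), comm y x, h3, comm x, comm y z,
    ← cen_left (Cen_neg (sm_cen he i))] at h2
  rw [← cancel h2, sm_neg, comm]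
theorem Hh_uniq {e : Q} (h3 : e + (e + e) = 0) (h0 : e ≠ 0) {x y z : Q} {i j : ZMod 3}
    (h : Hh e x y z i) (h' : Hh e x y z j) : i = j := by
  rw [Hh] at *
  exact sm_inj h3 h0 (cancel (h.symm.trans h'))

theorem exists_dat [Finite Q] (hc : Nat.card Q = 243) {a b c : Q} (h : ¬ Asc a b c) :
    ∃ k1 k2 k3 : Q → ZMod 3, Dat (u c a b) a b c k1 k2 k3 := by
  have gen := gen_univ hc h
  have hc1 : ¬ Asc c a b := fun hh => h (Asc_rot hh)
  have gen' := gen_univ hc hc1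
  obtain ⟨e, hed⟩ : ∃ e, e = u c a b := ⟨_, rfl⟩
  have he : Cen e := by
    have := u_Zof c a b
    rw [gen', ← Cen_iff] at this
    rwa [hed]
  have h3 : e + (e + e) = 0 := hed ▸ u_three c a b
  have h0 : e ≠ 0 := fun hh => hc1 ((u_zero_iff c a b).1 (hed ▸ hh))
  rw [← hed]
  have hI : ∀ S : Set Q, IsSub S → a ∈ S → b ∈ S → c ∈ S → ∀ x, x ∈ S := by
    intro S hS h1 h2 h3 x
    exact cl3_le hS h1 h2 h3 (gen ▸ trivial)
  have hsub : ∀ x y, IsSub {z | ∃ i, Hh e x y z i} := fun x y =>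
    { cen := fun z hz => ⟨0, Hh_cen e hz⟩
      add := fun z ⟨i, hi⟩ z' ⟨i', hi'⟩ => ⟨_, Hh_add he h3 hi hi'⟩
      neg := fun z ⟨i, hi⟩ => ⟨_, Hh_neg hi⟩ }
  have hself : ∀ x y, Hh e x y x 0 := fun x y => by rw [Hh, L_fst, sm_zero, addz]
  have hself' : ∀ x y, Hh e x y y 0 := fun x y => by rw [Hh, L_snd, sm_zero, addz]
  have habc : Hh e a b c 1 := by rw [Hh, sm_one, hed]; exact u_spec c a b
  have r : ∀ {x y z i}, Hh e x y z i → Hh e y z x i := fun {x y z i} hh => by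
    have := Hh_12 he (Hh_13 he hh); rwa [neg_neg] at this
  have s1 : ∀ z, ∃ i, Hh e a b z i := hI _ (hsub a b) ⟨_, hself a b⟩ ⟨_, hself' a b⟩ ⟨_, habc⟩
  have s2 : ∀ z, ∃ i, Hh e b c z i := hI _ (hsub b c) ⟨_, r habc⟩ ⟨_, hself b c⟩ ⟨_, hself' b c⟩
  have s3 : ∀ z, ∃ i, Hh e c a z i := hI _ (hsub c a) ⟨_, hself' c a⟩ ⟨_, r (r habc)⟩
    ⟨_, hself c a⟩
  have cyc : ∀ {x y z}, (∃ i, Hh e x y z i) → ∃ i, Hh e y z x i := fun ⟨i, hi⟩ => ⟨i, r hi⟩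
  have swp : ∀ {x y z}, (∃ i, Hh e x y z i) → ∃ i, Hh e y x z i := fun ⟨i, hi⟩ => ⟨_, Hh_12 he hi⟩
  have t1 : ∀ x z, ∃ i, Hh e a x z i := fun x => hI _ (hsub a x) ⟨_, hself a x⟩
    (cyc (swp (s1 x))) (cyc (s3 x))
  have t2 : ∀ x z, ∃ i, Hh e b x z i := fun x => hI _ (hsub b x) (cyc (s1 x))
    ⟨_, hself b x⟩ (cyc (swp (s2 x)))
  have t3 : ∀ x z, ∃ i, Hh e c x z i := fun x => hI _ (hsub c x) (cyc (swp (s3 x)))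
    (cyc (s2 x)) ⟨_, hself c x⟩
  have t : ∀ x y z, ∃ i, Hh e x y z i := fun x y => hI _ (hsub x y) (cyc (t1 x y)) (cyc (t2 x y))
    (cyc (t3 x y))
  choose D hD using t
  have uq : ∀ {x y z i}, Hh e x y z i → D x y z = i := fun {x y z i} hh =>
    Hh_uniq h3 h0 (hD x y z) hh
  have dadd : ∀ x y z z', D x y (z + z') = D x y z + D x y z' := fun x y z z' =>
    uq (Hh_add he h3 (hD x y z) (hD x y z'))
  have dneg : ∀ x y z, D x y (-z) = -D x y z := fun x y z => uq (Hh_neg (hD x y z))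
  have dcen : ∀ x y z, Cen z → D x y z = 0 := fun x y z hz => uq (Hh_cen e hz)
  have dcyc : ∀ x y z, D y z x = D x y z := fun x y z => uq (r (hD x y z))
  have dswp : ∀ x y z, D y x z = - D x y z := fun x y z => uq (Hh_12 he (hD x y z))
  have dabc : D a b c = 1 := uq habc
  have d1 : ∀ x y, D x y x = 0 := fun x y => uq (hself x y)
  have d2 : ∀ x y, D x y y = 0 := fun x y => uq (hself' x y)
  have d3 : ∀ x y, D x x y = 0 := fun x y => by rw [← dcyc, d1]
  have vb : D b c a = 1 := by rw [dcyc, dabc]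
  have vc : D c a b = 1 := by rw [dcyc, vb]
  have isub : ∀ f : Q → ZMod 3, (∀ z z', f (z + z') = f z + f z') → (∀ z, f (-z) = -f z) →
      (∀ z, Cen z → f z = 0) → f a = 0 → f b = 0 → f c = 0 → ∀ z, f z = 0 := by
    intro f f1 f2 f3 fa fb fc z
    refine hI {z | f z = 0} ⟨f3, fun x hx y hy => ?_, fun x hx => ?_⟩ fa fb fc z
    · change f _ = 0
      rw [f1, show f x = 0 from hx, show f y = 0 from hy, add_zero]
    · change f _ = 0
      rw [f2, show f x = 0 from hx, neg_zero]
  have ea : ∀ x y, D a x y - (D c a x * D a b y - D a b x * D c a y) = 0 := fun x =>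
    isub _ (fun z z' => by rw [dadd, dadd, dadd]; ring) (fun z => by rw [dneg, dneg, dneg]; ring)
      (fun z hz => by rw [dcen _ _ _ hz, dcen _ _ _ hz, dcen _ _ _ hz]; ring)
      (by rw [d1, d1, d2]; ring) (by rw [d2, vc, ← dcyc, ← dcyc, dswp]; ring)
      (by rw [dabc, d1, ← dcyc, ← dcyc]; ring)
  have eb : ∀ x y, D b x y - (D a b x * D b c y - D b c x * D a b y) = 0 := fun x =>
    isub _ (fun z z' => by rw [dadd, dadd, dadd]; ring) (fun z => by rw [dneg, dneg, dneg]; ring)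
      (fun z hz => by rw [dcen _ _ _ hz, dcen _ _ _ hz, dcen _ _ _ hz]; ring)
      (by rw [vb, d1, ← dcyc, ← dcyc]; ring) (by rw [d1, d1, d2]; ring) 
      (by rw [d2, dabc, ← dcyc, ← dcyc, dswp]; ring)
  have ec : ∀ x y, D c x y - (D b c x * D c a y - D c a x * D b c y) = 0 := fun x =>
    isub _ (fun z z' => by rw [dadd, dadd, dadd]; ring) (fun z => by rw [dneg, dneg, dneg]; ring)
      (fun z hz => by rw [dcen _ _ _ hz, dcen _ _ _ hz, dcen _ _ _ hz]; ring)
      (by rw [d2, vb, ← dcyc, ← dcyc, dswp]; ring) (by rw [vc, d1, ← dcyc, ← dcyc]; ring)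
      (by rw [d1, d1, d2]; ring)
  have eall : ∀ x y z, D x y z - det3 (D b c x) (D c a x) (D a b x) (D b c y) (D c a y) (D a b y)
      (D b c z) (D c a z) (D a b z) = 0 := fun x y =>
    isub _ (fun z z' => by simp only [dadd, det3]; ring) (fun z => by simp only [dneg, det3]; ring)
      (fun z hz => by rw [dcen _ _ _ hz, dcen _ _ _ hz, dcen _ _ _ hz, dcen _ _ _ hz, det3]; ring)
      (by rw [← dcyc, ← dcyc]; rw [d1, d2, vb, det3]; linear_combination ea x y)
      (by rw [← dcyc, ← dcyc]; rw [d1, d2, vc, det3]; linear_combination eb x y)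
      (by rw [← dcyc, ← dcyc]; rw [d1, d2, dabc, det3]; linear_combination ec x y)
  refine ⟨D b c, D c a, D a b, ⟨he, h3, h0, dadd _ _, dadd _ _, dadd _ _, vb, d2 _ _, d1 _ _,
    d1 _ _, vc, d2 _ _, d2 _ _, d1 _ _, dabc, gen, fun x y z => ?_⟩⟩
  rw [← sub_eq_zero.1 (eall x y z), L_spec x y z, show L x y z = _ from hD x y z,
    cen_right (sm_cen he _)]
end CML


namespace CML
variable {Q : Type} [CML Q]

/-- the cocycle -/
def bet (x1 x2 x3 y1 y2 y3 : ZMod 3) : ZMod 3 := (x3 - y3) * (x1 * y2 - x2 * y1)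

theorem three_zero : (3 : ZMod 3) = 0 := rfl

namespace Dat
variable {e a b c : Q} {k1 k2 k3 : Q → ZMod 3} (d : Dat e a b c k1 k2 k3)

theorem sm_uniq {i : ZMod 3} {x : Q} (d : Dat e a b c k1 k2 k3) (h : x = x + sm e i) : i = 0 := by
  have : sm e i = sm e 0 := by
    rw [sm_zero]; apply cancel (x := x); rw [← h, addz]
  exact sm_inj d.three d.ne this

theorem det_eq_zero (d : Dat e a b c k1 k2 k3) {z : Q} (hz : Cen z) (x y : Q) :
    det3 (k1 z) (k2 z) (k3 z) (k1 x) (k2 x) (k3 x) (k1 y) (k2 y) (k3 y) = 0 := by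
  have h := d.asc z x y
  rw [hz] at h
  exact d.sm_uniq h
theorem cen1 (d : Dat e a b c k1 k2 k3) {z : Q} (hz : Cen z) : k1 z = 0 := by
  have h := d.det_eq_zero hz b c
  simpa [d.b1, d.b2, d.b3, d.c1, d.c2, d.c3, det3] using h
theorem cen2 (d : Dat e a b c k1 k2 k3) {z : Q} (hz : Cen z) : k2 z = 0 := by
  have h := d.det_eq_zero hz c a
  simpa [d.a1, d.a2, d.a3, d.c1, d.c2, d.c3, det3] using h
theorem cen3 (d : Dat e a b c k1 k2 k3) {z : Q} (hz : Cen z) : k3 z = 0 := by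
  have h := d.det_eq_zero hz a b
  simpa [d.b1, d.b2, d.b3, d.a1, d.a2, d.a3, det3] using h
theorem cen_of (d : Dat e a b c k1 k2 k3) {z : Q} (h1 : k1 z = 0) (h2 : k2 z = 0) (h3 : k3 z = 0) :
    Cen z := by
  intro x y
  rw [d.asc, h1, h2, h3]
  simp [det3, sm_zero, addz]
theorem neg1 (d : Dat e a b c k1 k2 k3) (x : Q) : k1 (-x) = -k1 x := by
  have h := d.add1 x (-x)
  rw [add_neg_self, d.cen1 Cen_zero] at h
  exact (neg_eq_of_add_eq_zero_right h.symm).symm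
theorem neg2 (d : Dat e a b c k1 k2 k3) (x : Q) : k2 (-x) = -k2 x := by
  have h := d.add2 x (-x)
  rw [add_neg_self, d.cen2 Cen_zero] at h
  exact (neg_eq_of_add_eq_zero_right h.symm).symm
theorem neg3 (d : Dat e a b c k1 k2 k3) (x : Q) : k3 (-x) = -k3 x := by
  have h := d.add3 x (-x)
  rw [add_neg_self, d.cen3 Cen_zero] at h
  exact (neg_eq_of_add_eq_zero_right h.symm).symm
theorem sm1 (d : Dat e a b c k1 k2 k3) (i : ZMod 3) : k1 (sm e i) = 0 := d.cen1 (sm_cen d.cen i)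
theorem sm2 (d : Dat e a b c k1 k2 k3) (i : ZMod 3) : k2 (sm e i) = 0 := d.cen2 (sm_cen d.cen i)
theorem sm3 (d : Dat e a b c k1 k2 k3) (i : ZMod 3) : k3 (sm e i) = 0 := d.cen3 (sm_cen d.cen i)

/-- new addition -/
def nadd (_d : Dat e a b c k1 k2 k3) (x y : Q) : Q :=
  (x + y) + sm e (bet (k1 x) (k2 x) (k3 x) (k1 y) (k2 y) (k3 y))

theorem nadd_comm (x y : Q) : d.nadd x y = d.nadd y x := by
  unfold nadd
  rw [comm x y]
  congr 2
  unfold bet; ring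
theorem nadd_assoc (x y z : Q) : d.nadd (d.nadd x y) z = d.nadd x (d.nadd y z) := by
  unfold nadd
  simp only [d.add1, d.add2, d.add3, d.sm1, d.sm2, d.sm3, add_zero]
  rw [cen_right (sm_cen d.cen _) x (y + z), d.asc x y z, comm (x + y + sm e _) z,
    cen_right (sm_cen d.cen _) z (x + y), comm z (x + y)]
  rw [← cen_right (sm_cen d.cen _) ((x + y) + z), ← cen_right (sm_cen d.cen _) ((x + y) + z),
    ← cen_right (sm_cen d.cen _) ((x + y) + z) (sm e _ + sm e _),
    ← sm_add d.three, ← sm_add d.three, ← sm_add d.three]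
  congr 2
  unfold bet det3
  linear_combination (k3 y * (k1 x * k2 z - k2 x * k1 z)) * three_zero

/-- the abelian group -/
@[reducible] def grp : AddCommGroup Q where
  add := d.nadd
  zero := (0 : Q)
  neg x := -x
  add_assoc := d.nadd_assoc
  zero_add x := by
    change d.nadd 0 x = x
    unfold nadd
    rw [zadd, d.cen1 Cen_zero, d.cen2 Cen_zero, d.cen3 Cen_zero]
    simp [bet, sm_zero, addz]
  add_zero x := by
    change d.nadd x 0 = x
    unfold nadd
    rw [addz, d.cen1 Cen_zero, d.cen2 Cen_zero, d.cen3 Cen_zero]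
    simp [bet, sm_zero, addz]
  nsmul := @nsmulRec Q ⟨(0 : Q)⟩ ⟨d.nadd⟩
  zsmul := @zsmulRec Q ⟨(0 : Q)⟩ ⟨d.nadd⟩ ⟨fun x => -x⟩ (@nsmulRec Q ⟨(0 : Q)⟩ ⟨d.nadd⟩)
  neg_add_cancel x := by
    change d.nadd (-x) x = 0
    unfold nadd
    rw [neg_add_self, d.neg1, d.neg2, d.neg3]
    have : bet (-k1 x) (-k2 x) (-k3 x) (k1 x) (k2 x) (k3 x) = 0 := by unfold bet; ring
    rw [this, sm_zero, addz]
  add_comm := d.nadd_comm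

theorem exists_ab (d : Dat e a b c k1 k2 k3) : ∃ (A : Type) (_ : AddCommGroup A) (ι : Q ≃ A), 
    (∀ x y, ι x + ι y = ι ((x + y) + sm e (bet (k1 x) (k2 x) (k3 x) (k1 y) (k2 y) (k3 y)))) ∧
    (∀ x, ι (-x) = -ι x) ∧ ι 0 = 0 := 
  ⟨Q, d.grp, Equiv.refl Q, fun _ _ => rfl, fun _ => rfl, rfl⟩
end Dat

end CML


/-- `0, t, -t`. -/
def s3 {A : Type} [AddCommGroup A] (t : A) (i : ZMod 3) : A :=
  if i = 0 then 0 else if i = 1 then t else -t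

namespace CML
variable {Q : Type} [CML Q]

/-- the hypotheses on the automorphism -/
structure Aut (f : Q → Q) : Prop where
  add : ∀ x y, f (x + y) = f x + f y
  ff : ∀ x, x + f (f x) = f x
  k : ∀ x, ∃ k, Cen k ∧ x = k + (f x + f x)

namespace Aut
variable {f : Q → Q}

theorem gcen (h : Aut f) (x : Q) : Cen (x + f x) := by
  obtain ⟨k, hk, hx⟩ := h.k x
  have : x + f x = k + (f x + (f x + f x)) := by
    conv_lhs => rw [hx]
    rw [← hk, comm (f x + f x)]
    simp only [← hx]
  rw [this]
  exact Cen_add hk (three_cen _)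
theorem f_eq (x : Q) : f x = -x + (x + f x) := by rw [ip]
theorem zero (h : Aut f) : f 0 = 0 := by
  have := h.add 0 0
  rw [zadd] at this
  apply cancel (x := f 0)
  rw [← this, addz]
theorem neg (h : Aut f) (x : Q) : f (-x) = -f x := by
  apply eq_neg
  rw [← h.add, add_neg_self, h.zero]
theorem gadd (h : Aut f) (x y : Q) : (x + y) + f (x + y) = (x + f x) + (y + f y) := by
  rw [h.add, f_eq (f := f) x, f_eq (f := f) y, sum4 (h.gcen x) (h.gcen y), ← negadd, ip',
    ← f_eq, ← f_eq]
theorem gneg (h : Aut f) (x : Q) : (-x) + f (-x) = -(x + f x) := by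
  rw [h.neg, negadd]
theorem gzero (h : Aut f) : (0 : Q) + f 0 = 0 := by rw [h.zero, zadd]
variable {e a b c : Q} {k1 k2 k3 : Q → ZMod 3} 

theorem kf1 (h : Aut f) (d : Dat e a b c k1 k2 k3) (x : Q) : k1 (f x) = -k1 x := by
  rw [f_eq (f := f) x, d.add1, d.neg1, d.cen1 (h.gcen x), add_zero]
theorem kf2 (h : Aut f) (d : Dat e a b c k1 k2 k3) (x : Q) : k2 (f x) = -k2 x := by
  rw [f_eq (f := f) x, d.add2, d.neg2, d.cen2 (h.gcen x), add_zero]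
theorem kf3 (h : Aut f) (d : Dat e a b c k1 k2 k3) (x : Q) : k3 (f x) = -k3 x := by
  rw [f_eq (f := f) x, d.add3, d.neg3, d.cen3 (h.gcen x), add_zero]
theorem ge (h : Aut f) (d : Dat e a b c k1 k2 k3) : e + f e = 0 := by
  have h1 := d.asc a b c
  simp only [d.a1, d.a2, d.a3, d.b1, d.b2, d.b3, d.c1, d.c2, d.c3] at h1
  rw [show det3 1 0 0 0 1 0 0 0 1 = 1 from by decide, sm_one] at h1
  have h2 := congrArg f h1
  have h3 := d.asc (f a) (f b) (f c)
  simp only [h.kf1 d, h.kf2 d, h.kf3 d, d.a1, d.a2, d.a3, d.b1, d.b2, d.b3, d.c1, d.c2, d.c3] at h3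
  rw [show det3 (-1) (-0) (-0) (-0) (-1) (-0) (-0) (-0) (-1) = 2 from by decide, sm_two] at h3
  simp only [h.add] at h2
  have := cancel (h2.symm.trans h3)
  rw [this, add_neg_self]
theorem gsm (h : Aut f) {t : Q} (i : ZMod 3) : sm t i + f (sm t i) = sm (t + f t) i := by
  fin_cases i
  · exact h.gzero
  · rfl
  · exact h.gneg t

/-- The data of the associated abelian group. -/
structure AbD (f : Q → Q) (e : Q) (k1 k2 k3 : Q → ZMod 3)
    (A : Type) [AddCommGroup A] (ι : Q ≃ A) (κ1 κ2 κ3 : A →+ ZMod 3)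
    (π : A →+ A) : Prop where
  hz : ι 0 = 0
  hneg : ∀ x, ι (-x) = -ι x
  hcen : ∀ x z, Cen z → ι (x + z) = ι x + ι z
  hk1 : ∀ x, κ1 (ι x) = k1 x
  hk2 : ∀ x, κ2 (ι x) = k2 x
  hk3 : ∀ x, κ3 (ι x) = k3 x
  hπ : ∀ x, π (ι x) = ι (x + f x)
  ππ : ∀ x, π (π x) = 3 • π x - 3 • x
  e_three : (3 : ℕ) • ι e = 0
  hm : ∀ x y, ι ((x + -f x) + f y) = (2 : ℕ) • ι x - π (ι x) - ι y + π (ι y) +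
    s3 (ι e) (bet (k1 x) (k2 x) (k3 x) (k1 y) (k2 y) (k3 y))

theorem AbD.sm {A : Type} [AddCommGroup A] {ι : Q ≃ A} {κ1 κ2 κ3 : A →+ ZMod 3}
    {π : A →+ A} (q : AbD f e k1 k2 k3 A ι κ1 κ2 κ3 π) (t : Q) (i : ZMod 3) :
    ι (sm t i) = s3 (ι t) i := by
  fin_cases i
  · exact q.hz
  · rfl
  · exact q.hneg t

theorem exists_abd (h : Aut f) (d : Dat e a b c k1 k2 k3) : 
    ∃ (A : Type) (_ : AddCommGroup A) (ι : Q ≃ A) (κ1 κ2 κ3 : A →+ ZMod 3)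
    (π : A →+ A), AbD f e k1 k2 k3 A ι κ1 κ2 κ3 π := by
  obtain ⟨A, iA, ι, hadd, hneg, hz⟩ := d.exists_ab
  have hcen : ∀ x z, Cen z → ι (x + z) = ι x + ι z := by
    intro x z hz
    rw [hadd, d.cen1 hz, d.cen2 hz, d.cen3 hz]
    simp [bet, sm_zero, addz]
  have hsum : ∀ x y, ι (x + y) = ι x + ι y -
      ι (sm e (bet (k1 x) (k2 x) (k3 x) (k1 y) (k2 y) (k3 y))) := by
    intro x y
    rw [hadd, hcen _ _ (sm_cen d.cen _), add_sub_cancel_right]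
  have hsm : ∀ i, ι (sm e i) = s3 (ι e) i := by
    intro i
    fin_cases i
    · exact hz
    · rfl
    · exact hneg e
  let κ1 : A →+ ZMod 3 := AddMonoidHom.mk' (fun x => k1 (ι.symm x)) (by
    intro x y
    obtain ⟨x, rfl⟩ := ι.surjective x
    obtain ⟨y, rfl⟩ := ι.surjective y
    simp [hadd, d.add1, d.sm1])
  let κ2 : A →+ ZMod 3 := AddMonoidHom.mk' (fun x => k2 (ι.symm x)) (by
    intro x y
    obtain ⟨x, rfl⟩ := ι.surjective x
    obtain ⟨y, rfl⟩ := ι.surjective y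
    simp [hadd, d.add2, d.sm2])
  let κ3 : A →+ ZMod 3 := AddMonoidHom.mk' (fun x => k3 (ι.symm x)) (by
    intro x y
    obtain ⟨x, rfl⟩ := ι.surjective x
    obtain ⟨y, rfl⟩ := ι.surjective y
    simp [hadd, d.add3, d.sm3])
  let π : A →+ A := AddMonoidHom.mk' (fun x => ι (ι.symm x + f (ι.symm x))) (by
    intro x y
    obtain ⟨x, rfl⟩ := ι.surjective x
    obtain ⟨y, rfl⟩ := ι.surjective y
    rw [hadd]
    simp only [ι.symm_apply_apply]
    rw [h.gadd, h.gadd, h.gsm, h.ge d, show ∀ i, sm (0 : Q) i = 0 from ?_, addz,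
      hcen _ _ (h.gcen _)]
    intro i
    fin_cases i
    · rfl
    · rfl
    · exact negz)
  have hπ : ∀ x, π (ι x) = ι (x + f x) := by
    intro x
    change ι (ι.symm (ι x) + f (ι.symm (ι x))) = _
    rw [ι.symm_apply_apply]
  have hf : ∀ x, ι (f x) = π (ι x) - ι x := by
    intro x
    rw [f_eq (f := f) x, hcen _ _ (h.gcen x), hneg, hπ, neg_add_eq_sub]
  have hself : ∀ x1 x2 x3 : ZMod 3, bet x1 x2 x3 x1 x2 x3 = 0 := by
    intro x1 x2 x3; unfold bet; ring
  refine ⟨A, iA, ι, κ1, κ2, κ3, π, ⟨hz, hneg, hcen, ?_, ?_, ?_, hπ, ?_, ?_, ?_⟩⟩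
  · intro x; change k1 _ = _; rw [ι.symm_apply_apply]
  · intro x; change k2 _ = _; rw [ι.symm_apply_apply]
  · intro x; change k3 _ = _; rw [ι.symm_apply_apply]
  · intro x
    obtain ⟨x, rfl⟩ := ι.surjective x
    have h1 := congrArg ι (h.ff x)
    rw [hsum, h.kf1 d, h.kf1 d, h.kf2 d, h.kf2 d, h.kf3 d, h.kf3 d] at h1
    simp only [neg_neg, hself] at h1
    rw [sm_zero, hz, _root_.sub_zero, hf, hf, map_sub] at h1
    have : π (π (ι x)) = (ι x + (π (π (ι x)) - π (ι x) - (π (ι x) - ι x))) + 2 • π (ι x) - 2 • ι x := by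
      abel
    rw [this, h1]
    abel
  · have h1 := congrArg ι d.three
    rw [hcen _ _ (Cen_add d.cen d.cen), hcen _ _ d.cen, hz] at h1
    rw [← h1]; abel
  · intro x y
    have e1 : ι (x + -f x) = (2 : ℕ) • ι x - π (ι x) := by
      rw [hsum, d.neg1, d.neg2, d.neg3, h.kf1 d, h.kf2 d, h.kf3 d]
      simp only [neg_neg, hself]
      rw [sm_zero, hz, hneg, hf]
      abel
    rw [hsum, e1, hf, d.add1, d.add2, d.add3, d.neg1, d.neg2, d.neg3, h.kf1 d, h.kf2 d, h.kf3 d,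
      h.kf1 d, h.kf2 d, h.kf3 d]
    have : ∀ x1 x2 x3 y1 y2 y3 : ZMod 3, bet (x1 + - -x1) (x2 + - -x2) (x3 + - -x3) (-y1) (-y2) (-y3)
      = - bet x1 x2 x3 y1 y2 y3 := by
      intro x1 x2 x3 y1 y2 y3
      unfold bet
      linear_combination (-(x1 * x3 * y2) + x2 * x3 * y1 - x1 * y2 * y3 + x2 * y1 * y3 + 
        0) * three_zero
    rw [this, sm_neg, hneg, hsm]
    abel
end Aut

end CML


section S3
variable {A : Type} [AddCommGroup A]
theorem s3_zero (t : A) : s3 t 0 = 0 := rfl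
theorem s3_one (t : A) : s3 t 1 = t := rfl
theorem s3_two (t : A) : s3 t 2 = -t := rfl
theorem s3_neg (t : A) (i : ZMod 3) : s3 t (-i) = - s3 t i := by
  fin_cases i
  · exact neg_zero.symm
  · rfl
  · exact (neg_neg t).symm
theorem s3_add {t : A} (h : (3 : ℕ) • t = 0) (i j : ZMod 3) : s3 t (i + j) = s3 t i + s3 t j := by
  have h2 : t + t = -t := by
    rw [eq_neg_iff_add_eq_zero, ← h]; abel
  have h3 : -t + -t = t := by
    rw [← neg_add, h2, neg_neg]
  fin_cases i <;> fin_cases j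
  · exact (zero_add _).symm
  · exact (zero_add _).symm
  · exact (zero_add _).symm
  · exact (add_zero _).symm
  · exact h2.symm
  · exact (add_neg_cancel t).symm
  · exact (add_zero _).symm
  · exact (neg_add_cancel t).symm
  · exact h3.symm
theorem s3_eq_zero {t : A} (h : t ≠ 0) {i : ZMod 3} (hi : s3 t i = 0) : i = 0 := by
  fin_cases i
  · rfl
  · exact absurd hi h
  · exact absurd (neg_eq_zero.1 hi) h
theorem s3_map {B : Type} [AddCommGroup B] (f : A →+ B) (t : A) (i : ZMod 3) :
    f (s3 t i) = s3 (f t) i := by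
  fin_cases i
  · exact map_zero f
  · rfl
  · exact map_neg f t
theorem s3_z (i : ZMod 3) : s3 (0 : A) i = 0 := by
  fin_cases i
  · rfl
  · rfl
  · exact neg_zero
theorem s3_s3 (t : A) (i j : ZMod 3) : s3 (s3 t i) j = s3 t (i * j) := by
  fin_cases i <;> fin_cases j
  · rfl
  · rfl
  · exact neg_zero
  · rfl
  · rfl
  · rfl
  · rfl
  · rfl
  · exact neg_neg t

theorem nine {K : Type} [AddCommGroup K] (hc : Nat.card K = 9) (e : K) (he : e ≠ 0)
    (h3 : (3 : ℕ) • e = 0) (π : K →+ K) (πe : π e = 0) (ππ : ∀ x, π (π x) = 3 • π x - 3 • x) :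
    ∃ (u : K) (r : ZMod 3), (r = 0 ∨ r = 1) ∧ (3 : ℕ) • u = 0 ∧ π u = s3 e r ∧
      (∀ z, ∃ i j, z = s3 u i + s3 e j) ∧ (∀ i j, s3 u i + s3 e j = 0 → i = 0 ∧ j = 0) := by
  have : Finite K := Nat.finite_of_card_ne_zero (by rw [hc]; norm_num)
  let φ : ZMod 3 →+ K := AddMonoidHom.mk' (s3 e) (s3_add h3)
  have hφ : ∀ i, φ i = s3 e i := fun _ => rfl
  have hinj : Function.Injective φ := by
    rw [injective_iff_map_eq_zero]
    intro i hi
    exact s3_eq_zero he hi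
  have hcE : Nat.card φ.range = 3 := by
    have := Nat.card_range_of_injective hinj
    rw [Nat.card_zmod] at this
    exact this
  have hidx : φ.range.index = 3 := by
    have := φ.range.card_mul_index
    rw [hcE, hc] at this
    omega
  have hmem : ∀ x : K, (3 : ℕ) • x ∈ φ.range := by
    intro x
    have := φ.range.nsmul_index_mem x
    rwa [hidx] at this
  obtain ⟨u, hu⟩ : ∃ u, u ∉ φ.range := by
    by_contra! hh
    have : φ.range = ⊤ := by
      rw [eq_top_iff]; intro x _; exact hh x
    rw [this, AddSubgroup.index_top] at hidx
    omega
  have hu2 : (2 : ℕ) • u ∉ φ.range := by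
    intro hh
    apply hu
    have := φ.range.sub_mem (hmem u) hh
    have h1 : (3 : ℕ) • u - 2 • u = u := by abel
    rwa [h1] at this
  have hs : ∀ i, s3 u i ∈ φ.range → i = 0 := by
    intro i hi
    fin_cases i
    · rfl
    · exact absurd hi hu
    · exact absurd ((AddSubgroup.neg_mem_iff _).1 hi) hu
  have hd : ∀ i j, s3 u i - s3 u j ∈ φ.range → i = j := by
    intro i j hij
    fin_cases i <;> fin_cases j
    · rfl
    · exfalso; apply hu; rw [← AddSubgroup.neg_mem_iff]; convert hij using 1; exact (zero_sub u).symm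
    · exfalso; apply hu; convert hij using 1; change u = 0 - - u; abel
    · exfalso; apply hu; convert hij using 1; exact (sub_zero u).symm
    · rfl
    · exfalso; apply hu2; convert hij using 1; change 2 • u = u - - u; abel
    · exfalso; apply hu; rw [← AddSubgroup.neg_mem_iff]; convert hij using 1; exact (sub_zero (-u)).symm
    · exfalso; apply hu2; rw [← AddSubgroup.neg_mem_iff]; convert hij using 1
      change - (2 • u) = -u - u; abel
    · rfl
  have hbij : Function.Bijective (fun p : ZMod 3 × ZMod 3 => s3 u p.1 + s3 e p.2) := by
    apply Function.Injective.bijective_of_nat_card_le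
    · rintro ⟨i, j⟩ ⟨i', j'⟩ hh
      simp only at hh
      have h1 : i = i' := by
        apply hd
        have : s3 u i - s3 u i' = φ j' - φ j := by
          rw [hφ, hφ, sub_eq_sub_iff_add_eq_add, hh, add_comm]
        rw [this]
        exact φ.range.sub_mem ⟨_, rfl⟩ ⟨_, rfl⟩
      subst h1
      have := hinj (add_left_cancel hh)
      rw [this]
    · rw [hc, Nat.card_prod, Nat.card_zmod]
  have hsur : ∀ z, ∃ i j, z = s3 u i + s3 e j := by
    intro z
    obtain ⟨⟨i, j⟩, hh⟩ := hbij.2 z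
    exact ⟨i, j, hh.symm⟩
  have hind : ∀ i j, s3 u i + s3 e j = 0 → i = 0 ∧ j = 0 := by
    intro i j hh
    have := @hbij.1 (i, j) (0, 0) (by simpa [s3_zero] using hh)
    simpa using this
  obtain ⟨i, r, hr⟩ := hsur (π u)
  have hpp : π (π u) ∈ φ.range := by
    rw [ππ]; exact φ.range.sub_mem (hmem _) (hmem _)
  have hi : i = 0 := by
    by_contra hi
    have h1 : s3 (π u) i ∈ φ.range := by
      rw [show π (π u) = π (s3 u i + s3 e r) from congrArg π hr, map_add, s3_map, s3_map, πe, s3_z, add_zero] at hpp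
      exact hpp
    have h2 : π u ∈ φ.range := by
      fin_cases i
      · exact absurd rfl hi
      · exact h1
      · exact (AddSubgroup.neg_mem_iff _).1 h1
    apply hi
    apply hs
    have : s3 u i = π u - φ r := by rw [hr, hφ]; abel
    rw [this]
    exact φ.range.sub_mem h2 ⟨_, rfl⟩
  rw [hi, s3_zero, zero_add] at hr
  have hu3 : (3 : ℕ) • u = 0 := by
    have := ππ u
    rw [hr, s3_map, πe, s3_z, ← hφ, ← map_nsmul] at this
    rw [show (3 : ℕ) • r = 0 from by rw [nsmul_eq_mul]; exact zero_mul r, map_zero, zero_sub] at this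
    exact neg_eq_zero.1 this.symm
  by_cases hr0 : r = 2
  · refine ⟨-u, 1, Or.inr rfl, by rw [← neg_zero, ← hu3]; abel, ?_, ?_, ?_⟩
    · rw [map_neg, hr, hr0]; exact neg_neg e
    · intro z
      obtain ⟨i, j, hij⟩ := hsur z
      refine ⟨-i, j, ?_⟩
      rw [s3_neg, hij]
      congr 1
      fin_cases i
      · exact neg_zero.symm
      · exact (neg_neg u).symm
      · exact (neg_neg (-u)).symm
    · intro i j hij
      have : s3 (-u) i = s3 u (-i) := by
        rw [s3_neg]
        fin_cases i
        · exact neg_zero.symm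
        · rfl
        · rfl
      rw [this] at hij
      have := hind _ _ hij
      exact ⟨neg_eq_zero.1 this.1, this.2⟩
  · refine ⟨u, r, ?_, hu3, hr, hsur, hind⟩
    have : ∀ r : ZMod 3, ¬ r = 2 → r = 0 ∨ r = 1 := by decide
    exact this r hr0
end S3


namespace CML
variable {Q : Type} [CML Q]

/-- coordinates on the center -/
structure Nf (f : Q → Q) (e u : Q) (r : ZMod 3) (p q : Q → ZMod 3) : Prop where
  cen : Cen u
  three : u + (u + u) = 0
  gu : u + f u = sm e r
  ind : ∀ i j, sm u i + sm e j = 0 → i = 0 ∧ j = 0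
  g : ∀ x, x + f x = sm u (p x) + sm e (q x)
  padd : ∀ x y, p (x + y) = p x + p y
  qadd : ∀ x y, q (x + y) = q x + q y

theorem sm4 {u e : Q} (hu : Cen u) (he : Cen e) (u3 : u + (u + u) = 0) (e3 : e + (e + e) = 0)
    (i j i' j' : ZMod 3) :
    (sm u i + sm e j) + (sm u i' + sm e j') = sm u (i + i') + sm e (j + j') := by
  rw [sum4 (sm_cen he j) (sm_cen he j'), sm_add u3, sm_add e3]

theorem uniq2 {u e : Q} (hu : Cen u) (he : Cen e) (u3 : u + (u + u) = 0) (e3 : e + (e + e) = 0)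
    (ind : ∀ i j, sm u i + sm e j = 0 → i = 0 ∧ j = 0) {i j i' j' : ZMod 3}
    (h : sm u i + sm e j = sm u i' + sm e j') : i = i' ∧ j = j' := by
  have h1 : sm u (i + -i') + sm e (j + -j') = 0 := by
    rw [← sm4 hu he u3 e3, h, sm4 hu he u3 e3, add_neg_cancel, add_neg_cancel, sm_zero, sm_zero,
      addz]
  obtain ⟨h2, h3⟩ := ind _ _ h1
  exact ⟨add_neg_eq_zero.1 h2, add_neg_eq_zero.1 h3⟩

theorem nf_of {f : Q → Q} (h : Aut f) {e u : Q} {r : ZMod 3} (he : Cen e) (e3 : e + (e + e) = 0)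
    (hu : Cen u) (u3 : u + (u + u) = 0) (gu : u + f u = sm e r)
    (ind : ∀ i j, sm u i + sm e j = 0 → i = 0 ∧ j = 0)
    (ex : ∀ z, Cen z → ∃ i j, z = sm u i + sm e j) : ∃ p q, Nf f e u r p q := by
  choose p q hpq using fun x => ex _ (h.gcen x)
  have hh : ∀ x y, p (x + y) = p x + p y ∧ q (x + y) = q x + q y := by
    intro x y
    apply uniq2 hu he u3 e3 ind
    rw [← hpq, h.gadd, hpq, hpq, sm4 hu he u3 e3]
  exact ⟨p, q, hu, u3, gu, ind, hpq, fun x y => (hh x y).1, fun x y => (hh x y).2⟩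

theorem exists_nf (hc : Nat.card Q = 243) {f : Q → Q} (h : Aut f) {e a b c : Q}
    {k1 k2 k3 : Q → ZMod 3} (d : Dat e a b c k1 k2 k3) :
    ∃ (u : Q) (r : ZMod 3), (r = 0 ∨ r = 1) ∧ (∀ z, Cen z → ∃ i j, z = sm u i + sm e j) ∧
      Cen u ∧ u + (u + u) = 0 ∧ u + f u = sm e r ∧
      ∀ i j, sm u i + sm e j = 0 → i = 0 ∧ j = 0 := by
  obtain ⟨A, iA, ι, κ1, κ2, κ3, π, D⟩ := h.exists_abd d
  have hA : Nat.card A = 243 := by rw [← Nat.card_congr ι, hc]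
  let κ := κ1.prod (κ2.prod κ3)
  have hκ : ∀ x, κ (ι x) = (k1 x, k2 x, k3 x) := by
    intro x
    change (κ1 (ι x), κ2 (ι x), κ3 (ι x)) = _
    rw [D.hk1, D.hk2, D.hk3]
  have hK : ∀ x, ι x ∈ κ.ker ↔ Cen x := by
    intro x
    rw [AddMonoidHom.mem_ker, hκ]
    constructor
    · intro hh
      simp only [Prod.mk_eq_zero] at hh
      exact d.cen_of hh.1 hh.2.1 hh.2.2
    · intro hx
      rw [d.cen1 hx, d.cen2 hx, d.cen3 hx]; rfl
  have hsur : Function.Surjective κ := by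
    rintro ⟨i, j, k⟩
    refine ⟨s3 (ι a) i + s3 (ι b) j + s3 (ι c) k, ?_⟩
    rw [map_add, map_add, s3_map, s3_map, s3_map, hκ, hκ, hκ]
    rw [d.a1, d.a2, d.a3, d.b1, d.b2, d.b3, d.c1, d.c2, d.c3]
    revert i j k
    decide
  have hcK : Nat.card κ.ker = 9 := by
    have h1 := κ.ker.card_mul_index
    rw [AddSubgroup.index_ker, AddMonoidHom.range_eq_top.2 hsur, hA] at h1
    have h2 : Nat.card (⊤ : AddSubgroup (ZMod 3 × ZMod 3 × ZMod 3)) = 27 := by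
      rw [AddSubgroup.card_top, Nat.card_prod, Nat.card_prod, Nat.card_zmod]
    rw [h2] at h1
    omega
  have hπK : ∀ x ∈ κ.ker, π x ∈ κ.ker := by
    intro x _
    obtain ⟨x, rfl⟩ := ι.surjective x
    rw [D.hπ, hK]
    exact h.gcen x
  let π' : κ.ker →+ κ.ker := AddMonoidHom.mk' (fun x => ⟨π x.1, hπK _ x.2⟩) (by
    intro x y
    apply Subtype.ext
    simp)
  let e' : κ.ker := ⟨ι e, (hK e).2 d.cen⟩
  have ιinj := ι.injective
  obtain ⟨u', r, hr, u3, hu, hsp, hind⟩ := nine hcK e' (by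
      intro hh
      have := congrArg Subtype.val hh
      exact d.ne (ιinj (this.trans D.hz.symm)))
    (Subtype.ext D.e_three) π' (by
      apply Subtype.ext
      change π (ι e) = 0
      rw [D.hπ, h.ge d, D.hz]) (by
      intro x
      apply Subtype.ext
      exact D.ππ x.1)
  obtain ⟨u, hu'⟩ := ι.surjective u'.1
  have hv : ∀ (t : κ.ker) (i : ZMod 3), (s3 t i).1 = s3 t.1 i := by
    intro t i
    fin_cases i
    · rfl
    · rfl
    · rfl
  have hval : ∀ i j, ι (sm u i + sm e j) = (s3 u' i + s3 e' j).1 := by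
    intro i j
    rw [D.hcen _ _ (sm_cen d.cen _), D.sm, D.sm, hu']
    change _ = (s3 u' i).1 + (s3 e' j).1
    rw [hv, hv]
  have hcu : Cen u := (hK u).1 (by rw [hu']; exact u'.2)
  refine ⟨u, r, hr, ?_, hcu, ?_, ?_, ?_⟩
  · intro z hz
    obtain ⟨i, j, hij⟩ := hsp ⟨ι z, (hK z).2 hz⟩
    refine ⟨i, j, ιinj ?_⟩
    rw [hval, ← hij]
  · apply ιinj
    rw [D.hcen _ _ (Cen_add hcu hcu), D.hcen _ _ hcu, D.hz, hu']
    have := congrArg Subtype.val u3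
    simp only [AddSubgroup.coe_nsmul, ZeroMemClass.coe_zero] at this
    rw [← this]; abel
  · apply ιinj
    rw [← D.hπ, hu', D.sm]
    have := congrArg Subtype.val hu
    rw [hv] at this
    exact this
  · intro i j hij
    apply hind
    apply Subtype.ext
    rw [← hval, hij, D.hz]; rfl
end CML


namespace CML
variable {Q : Type} [CML Q]

/-- standard configuration -/
structure Std (f : Q → Q) (r p1 q1 q2 : ZMod 3) (e a b c u : Q) (k1 k2 k3 : Q → ZMod 3) :
    Prop where
  d : Dat e a b c k1 k2 k3
  cen : Cen u
  ind : ∀ i j, sm u i + sm e j = 0 → i = 0 ∧ j = 0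
  gu : u + f u = sm e r
  ga : a + f a = sm u p1 + sm e q1
  gb : b + f b = sm e q2
  gc : c + f c = 0

/-- existence of a standard configuration -/
def Good (f : Q → Q) (r p1 q1 q2 : ZMod 3) : Prop :=
  ∃ e a b c u k1 k2 k3, Std f r p1 q1 q2 e a b c u k1 k2 k3

/-- linear combination -/
def cmb (a b c : Q) (i j k : ZMod 3) : Q := (sm a i + sm b j) + sm c k

theorem fun_sm {φ : Q → ZMod 3} (h : ∀ x y, φ (x + y) = φ x + φ y) (t : Q) (i : ZMod 3) :
    φ (sm t i) = i * φ t := by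
  have h0 : φ 0 = 0 := by
    have := h 0 0
    rw [zadd] at this
    simpa using this
  have hn : φ (-t) = - φ t := by
    have := h t (-t)
    rw [add_neg_self, h0] at this
    exact (neg_eq_of_add_eq_zero_right this.symm).symm
  fin_cases i
  · exact h0.trans (zero_mul _).symm
  · exact (one_mul _).symm
  · exact hn.trans (neg_one_mul _).symm
theorem fun_cmb {φ : Q → ZMod 3} (h : ∀ x y, φ (x + y) = φ x + φ y) (a b c : Q) (i j k : ZMod 3) :
    φ (cmb a b c i j k) = i * φ a + j * φ b + k * φ c := by
  rw [cmb, h, h, fun_sm h, fun_sm h, fun_sm h]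

theorem B1 (P1 P2 P3 : ZMod 3) (h : ¬ (P1 = 0 ∧ P2 = 0 ∧ P3 = 0)) : ∃ x1 x2 x3 y1 y2 y3 z1 z2 z3,
    det3 x1 x2 x3 y1 y2 y3 z1 z2 z3 = 1 ∧ x1 * P1 + x2 * P2 + x3 * P3 = 1 ∧
    y1 * P1 + y2 * P2 + y3 * P3 = 0 ∧ z1 * P1 + z2 * P2 + z3 * P3 = 0 := by
  by_cases h1 : P1 = 0
  · by_cases h2 : P2 = 0
    · refine ⟨0, 0, P3, 1, 0, 0, 0, P3, 0, ?_⟩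
      revert P1 P2 P3
      decide
    · refine ⟨0, P2, 0, 0, -P3 * P2, 1, P2, 0, 0, ?_⟩
      revert P1 P2 P3
      decide
  · refine ⟨P1, 0, 0, -P2 * P1, 1, 0, -P3, 0, P1, ?_⟩
    revert P1 P2 P3
    decide
theorem B2 (P2 P3 : ZMod 3) (h : ¬ (P2 = 0 ∧ P3 = 0)) : ∃ y2 y3 z2 z3 : ZMod 3,
    y2 * z3 - y3 * z2 = 1 ∧ 
    y2 * P2 + y3 * P3 = 1 ∧ z2 * P2 + z3 * P3 = 0 := by
  by_cases h2 : P2 = 0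
  · refine ⟨0, P3, -P3, 0, ?_⟩
    revert P2 P3
    decide
  · refine ⟨P2, 0, -P3, P2, ?_⟩
    revert P2 P3
    decide

/-- determinant one triples -/
def Trip (k1 k2 k3 : Q → ZMod 3) (a b c : Q) : Prop :=
  det3 (k1 a) (k2 a) (k3 a) (k1 b) (k2 b) (k3 b) (k1 c) (k2 c) (k3 c) = 1

theorem Trip_cmb {e a0 b0 c0 : Q} {k1 k2 k3 : Q → ZMod 3} (d : Dat e a0 b0 c0 k1 k2 k3) {a b c : Q}
    (h : Trip k1 k2 k3 a b c) {x1 x2 x3 y1 y2 y3 z1 z2 z3 : ZMod 3}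
    (hd : det3 x1 x2 x3 y1 y2 y3 z1 z2 z3 = 1) :
    Trip k1 k2 k3 (cmb a b c x1 x2 x3) (cmb a b c y1 y2 y3) (cmb a b c z1 z2 z3) := by
  unfold Trip at *
  simp only [fun_cmb d.add1, fun_cmb d.add2, fun_cmb d.add3]
  rw [← one_mul (1 : ZMod 3)]
  nth_rw 1 [← hd]
  rw [← h]
  unfold det3
  ring
theorem Trip_cen {e a0 b0 c0 : Q} {k1 k2 k3 : Q → ZMod 3} (d : Dat e a0 b0 c0 k1 k2 k3) {a b c : Q}
    (h : Trip k1 k2 k3 a b c) {x y z : Q} (hx : Cen x) (hy : Cen y) (hz : Cen z) :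
    Trip k1 k2 k3 (a + x) (b + y) (c + z) := by
  unfold Trip at *
  simp only [d.add1, d.add2, d.add3, d.cen1 hx, d.cen1 hy, d.cen1 hz,
     d.cen2 hx, d.cen2 hy, d.cen2 hz, d.cen3 hx, d.cen3 hy, d.cen3 hz, add_zero]
  exact h

theorem fin_dat [Finite Q] (hc : Nat.card Q = 243) {e a0 b0 c0 : Q} {k1 k2 k3 : Q → ZMod 3}
    (d : Dat e a0 b0 c0 k1 k2 k3) {a b c : Q} (h : Trip k1 k2 k3 a b c) :
    ∃ k1' k2' k3', Dat e a b c k1' k2' k3' := by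
  have h1 := d.asc a b c
  rw [show det3 _ _ _ _ _ _ _ _ _ = 1 from h, sm_one] at h1
  have h2 : ¬ Asc a b c := by
    intro hA
    rw [show a + (b + c) = (a + b) + c from hA] at h1
    exact d.ne (cancel ((addz _).trans h1)).symm
  obtain ⟨k1', k2', k3', d'⟩ := exists_dat hc h2
  have hu : u c a b = e := by
    rw [L_spec, ← cen_right d.cen] at h1
    have := cancel h1
    rw [u, this, ip]
  rw [hu] at d'
  exact ⟨_, _, _, d'⟩

theorem good_of [Finite Q] (hc : Nat.card Q = 243) {e a0 b0 c0 : Q} {k1 k2 k3 : Q → ZMod 3}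
    (d : Dat e a0 b0 c0 k1 k2 k3) {f : Q → Q} {r p1 q1 q2 : ZMod 3} {a b c u : Q}
    (h : Trip k1 k2 k3 a b c) (cen : Cen u)
    (ind : ∀ i j, sm u i + sm e j = 0 → i = 0 ∧ j = 0) (gu : u + f u = sm e r)
    (ga : a + f a = sm u p1 + sm e q1) (gb : b + f b = sm e q2) (gc : c + f c = 0) :
    Good f r p1 q1 q2 := by
  obtain ⟨k1', k2', k3', d'⟩ := fin_dat hc d h
  exact ⟨e, a, b, c, u, _, _, _, ⟨d', cen, ind, gu, ga, gb, gc⟩⟩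

theorem normal [Finite Q] (hc : Nat.card Q = 243) {f : Q → Q} (hf : Aut f) {a b c : Q}
    (hn : ¬ Asc a b c) :
    Good f 0 0 0 0 ∨ Good f 0 0 1 0 ∨ Good f 0 1 0 0 ∨ Good f 0 1 0 1 ∨ Good f 1 0 0 0 ∨
    Good f 1 1 0 0 := by
  obtain ⟨k1, k2, k3, d⟩ := exists_dat hc hn
  generalize u c a b = e at d
  obtain ⟨u, r, hr, hspan, hcu, hu3, hgu, hind⟩ := exists_nf hc hf d
  obtain ⟨p, q, N⟩ := nf_of hf d.cen d.three hcu hu3 hgu hind hspan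
  have ht : Trip k1 k2 k3 a b c := by
    unfold Trip
    rw [d.a1, d.a2, d.a3, d.b1, d.b2, d.b3, d.c1, d.c2, d.c3]; decide
  have hpq : p u = 0 ∧ q u = r := by
    have h1 := N.g u
    rw [hgu, ← zadd (sm e r), ← sm_zero u] at h1
    have := uniq2 hcu d.cen hu3 d.three hind h1
    exact ⟨this.1.symm, this.2.symm⟩
  have go : ∀ {a b c : Q} {p1 q1 q2 : ZMod 3}, Trip k1 k2 k3 a b c → p a = p1 → q a = q1 →
      p b = 0 → q b = q2 → p c = 0 → q c = 0 → Good f r p1 q1 q2 := by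
    intro a b c p1 q1 q2 ht h1 h2 h3 h4 h5 h6
    refine good_of hc d ht hcu hind hgu ?_ ?_ ?_
    · rw [N.g, h1, h2]
    · rw [N.g, h3, h4, sm_zero, zadd]
    · rw [N.g, h5, h6, sm_zero, sm_zero, zadd]
  rcases hr with rfl | rfl
  · -- r = 0
    by_cases hp : p a = 0 ∧ p b = 0 ∧ p c = 0
    · by_cases hq : q a = 0 ∧ q b = 0 ∧ q c = 0
      · left
        exact go ht hp.1 hq.1 hp.2.1 hq.2.1 hp.2.2 hq.2.2
      · right; left
        obtain ⟨x1, x2, x3, y1, y2, y3, z1, z2, z3, hd, h1, h2, h3⟩ := B1 _ _ _ hq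
        have hz : ∀ i j k, p (cmb a b c i j k) = 0 := by
          intro i j k
          rw [fun_cmb N.padd, hp.1, hp.2.1, hp.2.2]; ring
        refine go (Trip_cmb d ht hd) (hz _ _ _) ?_ (hz _ _ _) ?_ (hz _ _ _) ?_
        · rw [fun_cmb N.qadd, h1]
        · rw [fun_cmb N.qadd, h2]
        · rw [fun_cmb N.qadd, h3]
    · obtain ⟨x1, x2, x3, y1, y2, y3, z1, z2, z3, hd, h1, h2, h3⟩ := B1 _ _ _ hp
      have ht' := Trip_cmb d ht hd
      rw [← fun_cmb N.padd] at h1 h2 h3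
      generalize cmb a b c x1 x2 x3 = a' at *
      generalize cmb a b c y1 y2 y3 = b' at *
      generalize cmb a b c z1 z2 z3 = c' at *
      have ga : a' + f a' = u + sm e (q a') := by rw [N.g, h1, sm_one]
      have hcu' : Cen (u + sm e (q a')) := Cen_add hcu (sm_cen d.cen _)
      have hgu' : (u + sm e (q a')) + f (u + sm e (q a')) = sm e 0 := by
        rw [hf.gadd, hgu, hf.gsm, hf.ge d, sm_zero, zadd]
        generalize q a' = i
        fin_cases i
        · rfl
        · rfl
        · exact negz
      have hsmu : ∀ i, sm (u + sm e (q a')) i = sm u i + sm e (i * q a') := by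
        intro i
        fin_cases i
        · change 0 = 0 + sm e (0 * q a')
          rw [zero_mul, sm_zero, zadd]
        · change _ = _ + sm e (1 * q a')
          rw [one_mul]; rfl
        · change - _ = -u + sm e ((-1) * q a')
          rw [negadd, neg_one_mul, sm_neg]
      have hind' : ∀ i j, sm (u + sm e (q a')) i + sm e j = 0 → i = 0 ∧ j = 0 := by
        intro i j hij
        rw [hsmu, ← cen_right (sm_cen d.cen _), ← sm_add d.three] at hij
        obtain ⟨h4, h5⟩ := hind _ _ hij
        rw [h4] at h5
        exact ⟨h4, by simpa using h5⟩
      by_cases hq : q b' = 0 ∧ q c' = 0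
      · right; right; left
        refine good_of hc d ht' hcu' hind' hgu' ?_ ?_ ?_
        · rw [ga, sm_one, sm_zero, addz]
        · rw [N.g, h2, hq.1, sm_zero, sm_zero, zadd]
        · rw [N.g, h3, hq.2, sm_zero, sm_zero, zadd]
      · right; right; right; left
        obtain ⟨y2, y3, z2, z3, hd2, h4, h5⟩ := B2 _ _ hq
        have hd3 : det3 1 0 0 0 y2 y3 0 z2 z3 = 1 := by
          rw [det3]; linear_combination hd2
        have ht2 := Trip_cmb d ht' hd3
        rw [show cmb a' b' c' 1 0 0 = a' from by rw [cmb, sm_one, sm_zero, sm_zero, addz, addz]] at ht2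
        refine good_of hc d ht2 hcu' hind' hgu' ?_ ?_ ?_
        · rw [ga, sm_one, sm_zero, addz]
        · rw [N.g, fun_cmb N.padd, fun_cmb N.qadd, h2, h3]
          simp only [zero_mul, mul_zero, zero_add, h4]
          rw [sm_zero, zadd]
        · rw [N.g, fun_cmb N.padd, fun_cmb N.qadd, h2, h3]
          simp only [zero_mul, mul_zero, zero_add, h5]
          rw [sm_zero, sm_zero, zadd]
  · -- r = 1
    have adj : ∀ {a b c : Q} {p1 : ZMod 3}, Trip k1 k2 k3 a b c → p a = p1 → p b = 0 → p c = 0 →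
        Good f 1 p1 0 0 := by
      intro a b c p1 ht h1 h2 h3
      have hp : ∀ x i, p (x + sm u i) = p x := by
        intro x i
        rw [N.padd, fun_sm N.padd, hpq.1, mul_zero, add_zero]
      have hq : ∀ x, q (x + sm u (- q x)) = 0 := by
        intro x
        rw [N.qadd, fun_sm N.qadd, hpq.2]; ring
      refine go (Trip_cen d ht (x := sm u (- q a)) (y := sm u (- q b)) (z := sm u (- q c))
        (sm_cen hcu _) (sm_cen hcu _) (sm_cen hcu _)) ?_ (hq _) ?_ (hq _) ?_ (hq _)
      · rw [hp, h1]
      · rw [hp, h2]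
      · rw [hp, h3]
    by_cases hp : p a = 0 ∧ p b = 0 ∧ p c = 0
    · right; right; right; right; left
      exact adj ht hp.1 hp.2.1 hp.2.2
    · right; right; right; right; right
      obtain ⟨x1, x2, x3, y1, y2, y3, z1, z2, z3, hd, h1, h2, h3⟩ := B1 _ _ _ hp
      rw [← fun_cmb N.padd] at h1 h2 h3
      exact adj (Trip_cmb d ht hd) h1 h2 h3
end CML


/-- underlying set of the representatives -/
abbrev V5 := ZMod 3 × ZMod 3 × ZMod 3 × ZMod 3 × ZMod 3

/-- the representatives -/
def op5 (r p1 q1 q2 : ZMod 3) : V5 → V5 → V5 := fun (i, j, k, l, m) (i', j', k', l', m') =>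
  (-(i + i'), -(j + j'), -(k + k'), -(l + l') + p1 * (i' - i),
   -(m + m') + q1 * (i' - i) + q2 * (j' - j) + r * (l' - l)
    - p1 * r * (i + i * i * i' + i * i' * i') + (k - k') * (i * j' - j * i'))

theorem s3_carry {A : Type} [AddCommGroup A] {a e : A} {w : ZMod 3} (h : (3 : ℕ) • a = s3 e w)
    (i i' : ZMod 3) :
    (2 : ℕ) • s3 a i - s3 a i' = s3 a (-(i + i')) + s3 e (w * (i + i * i * i' + i * i' * i')) := by
  rw [← s3_s3, ← h]
  fin_cases i <;> fin_cases i'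
  · change (2 : ℕ) • (0 : A) - 0 = 0 + 0; abel
  · change (2 : ℕ) • (0 : A) - a = -a + 0; abel
  · change (2 : ℕ) • (0 : A) - -a = a + 0; abel
  · change (2 : ℕ) • a - 0 = -a + (3 : ℕ) • a; abel
  · change (2 : ℕ) • a - a = a + 0; abel
  · change (2 : ℕ) • a - -a = 0 + (3 : ℕ) • a; abel
  · change (2 : ℕ) • -a - 0 = a + -((3 : ℕ) • a); abel
  · change (2 : ℕ) • -a - a = 0 + -((3 : ℕ) • a); abel
  · change (2 : ℕ) • -a - -a = -a + 0; abel
theorem s3_lin {A : Type} [AddCommGroup A] {a : A} (h : (3 : ℕ) • a = 0)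
    (i i' : ZMod 3) : (2 : ℕ) • s3 a i - s3 a i' = s3 a (-(i + i')) := by
  have := s3_carry (e := (0 : A)) (w := 0) (h.trans (s3_zero _).symm) i i'
  rwa [s3_z, add_zero] at this
theorem s3_addl {A : Type} [AddCommGroup A] (x y : A) (i : ZMod 3) :
    s3 (x + y) i = s3 x i + s3 y i := by
  fin_cases i
  · exact (add_zero _).symm
  · rfl
  · exact neg_add x y
theorem s3_nsmul {A : Type} [AddCommGroup A] (n : ℕ) (x : A) (i : ZMod 3) :
    n • s3 x i = s3 (n • x) i := by
  fin_cases i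
  · exact smul_zero _
  · rfl
  · exact neg_nsmul x n

namespace CML
variable {Q : Type} [CML Q]

theorem Std.iso [Finite Q] (hc : Nat.card Q = 243) {f : Q → Q} (hf : Aut f)
    {r p1 q1 q2 : ZMod 3} {e a b c u : Q} {k1 k2 k3 : Q → ZMod 3}
    (S : Std f r p1 q1 q2 e a b c u k1 k2 k3) :
    ∃ F : V5 ≃ Q, ∀ x y, F (op5 r p1 q1 q2 x y) = (F x + -f (F x)) + f (F y) := by
  have d := S.d
  obtain ⟨A, iA, ι, κ1, κ2, κ3, π, D⟩ := hf.exists_abd d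
  have πe : π (ι e) = 0 := by rw [D.hπ, hf.ge d, D.hz]
  have πu : π (ι u) = s3 (ι e) r := by rw [D.hπ, S.gu, D.sm]
  have πc : π (ι c) = 0 := by rw [D.hπ, S.gc, D.hz]
  have πb : π (ι b) = s3 (ι e) q2 := by rw [D.hπ, S.gb, D.sm]
  have πa : π (ι a) = s3 (ι u) p1 + s3 (ι e) q1 := by
    rw [D.hπ, S.ga, D.hcen _ _ (sm_cen d.cen _), D.sm, D.sm]
  have hind : ∀ i j, s3 (ι u) i + s3 (ι e) j = 0 → i = 0 ∧ j = 0 := by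
    intro i j hij
    apply S.ind
    apply ι.injective
    rw [D.hcen _ _ (sm_cen d.cen _), D.sm, D.sm, D.hz, hij]
  have a1 : κ1 (ι a) = 1 := by rw [D.hk1, d.a1]
  have a2 : κ2 (ι a) = 0 := by rw [D.hk2, d.a2]
  have a3 : κ3 (ι a) = 0 := by rw [D.hk3, d.a3]
  have b1 : κ1 (ι b) = 0 := by rw [D.hk1, d.b1]
  have b2 : κ2 (ι b) = 1 := by rw [D.hk2, d.b2]
  have b3 : κ3 (ι b) = 0 := by rw [D.hk3, d.b3]
  have c1 : κ1 (ι c) = 0 := by rw [D.hk1, d.c1]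
  have c2 : κ2 (ι c) = 0 := by rw [D.hk2, d.c2]
  have c3 : κ3 (ι c) = 1 := by rw [D.hk3, d.c3]
  have u1 : κ1 (ι u) = 0 := by rw [D.hk1, d.cen1 S.cen]
  have u2 : κ2 (ι u) = 0 := by rw [D.hk2, d.cen2 S.cen]
  have u3 : κ3 (ι u) = 0 := by rw [D.hk3, d.cen3 S.cen]
  have e1 : κ1 (ι e) = 0 := by rw [D.hk1, d.cen1 d.cen]
  have e2 : κ2 (ι e) = 0 := by rw [D.hk2, d.cen2 d.cen]
  have e3 : κ3 (ι e) = 0 := by rw [D.hk3, d.cen3 d.cen]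
  have te := D.e_three
  have ππ : ∀ x, (3 : ℕ) • x = (3 : ℕ) • π x - π (π x) := by
    intro x; rw [D.ππ x, sub_sub_cancel]
  have hk1 : ∀ x, k1 (ι.symm x) = κ1 x := by
    intro x; rw [← D.hk1, ι.apply_symm_apply]
  have hk2 : ∀ x, k2 (ι.symm x) = κ2 x := by
    intro x; rw [← D.hk2, ι.apply_symm_apply]
  have hk3 : ∀ x, k3 (ι.symm x) = κ3 x := by
    intro x; rw [← D.hk3, ι.apply_symm_apply]
  have hm : ∀ x y, (ι.symm x + -f (ι.symm x)) + f (ι.symm y) = ι.symm (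
      (2 : ℕ) • x - π x - y + π y + s3 (ι e) (bet (κ1 x) (κ2 x) (κ3 x) (κ1 y) (κ2 y) (κ3 y))) := by
    intro x y
    rw [Equiv.eq_symm_apply, D.hm, hk1, hk2, hk3, hk1, hk2, hk3, ι.apply_symm_apply,
      ι.apply_symm_apply]
  clear D
  generalize ι a = a at *
  generalize ι b = b at *
  generalize ι c = c at *
  generalize ι u = u at *
  generalize ι e = e at *
  have tse : ∀ w, (3 : ℕ) • s3 e w = 0 := by
    intro w; rw [s3_nsmul, te, s3_z]
  have tu : (3 : ℕ) • u = 0 := by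
    rw [ππ, πu, tse, s3_map, πe, s3_z, _root_.sub_zero]
  have tb : (3 : ℕ) • b = 0 := by
    rw [ππ, πb, tse, s3_map, πe, s3_z, _root_.sub_zero]
  have tc : (3 : ℕ) • c = 0 := by
    rw [ππ, πc, map_zero, smul_zero, _root_.sub_zero]
  have ta : (3 : ℕ) • a = s3 e (-(p1 * r)) := by
    rw [ππ, πa, smul_add, tse, s3_nsmul, tu, s3_z, map_add, s3_map, s3_map, πe, s3_z, πu, s3_s3,
      s3_neg, mul_comm]
    abel
  let G : V5 → A := fun x => s3 a x.1 + s3 b x.2.1 + s3 c x.2.2.1 + s3 u x.2.2.2.1 + s3 e x.2.2.2.2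
  have G1 : ∀ x, κ1 (G x) = x.1 := by
    intro x
    simp only [G, map_add, s3_map, a1, b1, c1, u1, e1, s3_z, add_zero]
    generalize x.1 = i
    revert i; decide
  have G2 : ∀ x, κ2 (G x) = x.2.1 := by
    intro x
    simp only [G, map_add, s3_map, a2, b2, c2, u2, e2, s3_z, add_zero, zero_add]
    generalize x.2.1 = i
    revert i; decide
  have G3 : ∀ x, κ3 (G x) = x.2.2.1 := by
    intro x
    simp only [G, map_add, s3_map, a3, b3, c3, u3, e3, s3_z, add_zero, zero_add]
    generalize x.2.2.1 = i
    revert i; decide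
  have Gπ : ∀ x, π (G x) = s3 u (p1 * x.1) + s3 e (q1 * x.1) + s3 e (q2 * x.2.1) +
      s3 e (r * x.2.2.2.1) := by
    intro x
    simp only [G, map_add, s3_map, πa, πb, πc, πu, πe, s3_z, add_zero, s3_addl, s3_s3]
  have Ginj : Function.Injective G := by
    rintro ⟨i, j, k, l, m⟩ ⟨i', j', k', l', m'⟩ hh
    have h1 := congrArg κ1 hh
    have h2 := congrArg κ2 hh
    have h3 := congrArg κ3 hh
    rw [G1, G1] at h1
    rw [G2, G2] at h2
    rw [G3, G3] at h3
    simp only at h1 h2 h3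
    subst h1 h2 h3
    simp only [G, add_assoc, add_right_inj] at hh
    have h4 := hind (l + -l') (m + -m') (by
      rw [s3_add tu, s3_add te, s3_neg, s3_neg]
      rw [← sub_eq_zero] at hh
      rw [← hh]; abel)
    rw [add_neg_eq_zero.1 h4.1, add_neg_eq_zero.1 h4.2]
  have Finj : Function.Injective (fun x => ι.symm (G x)) := ι.symm.injective.comp Ginj
  have Fbij := Finj.bijective_of_nat_card_le (by
    rw [hc]; simp only [V5, Nat.card_prod, Nat.card_zmod]; norm_num)
  refine ⟨Equiv.ofBijective _ Fbij, ?_⟩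
  intro x y
  change ι.symm (G (op5 r p1 q1 q2 x y)) = (ι.symm (G x) + -f (ι.symm (G x))) + f (ι.symm (G y))
  rw [hm]
  congr 1
  rw [G1, G1, G2, G2, G3, G3, Gπ, Gπ]
  obtain ⟨i, j, k, l, m⟩ := x
  obtain ⟨i', j', k', l', m'⟩ := y
  simp only [G, op5]
  have ha := s3_carry ta i i'
  have hb := s3_lin tb j j'
  have hcc := s3_lin tc k k'
  have hu := s3_lin tu l l'
  have he := s3_lin te m m'
  have hE : s3 e (-(m + m') + q1 * (i' - i) + q2 * (j' - j) + r * (l' - l)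
      - p1 * r * (i + i * i * i' + i * i' * i') + (k - k') * (i * j' - j * i')) =
      s3 e (-(m + m')) + s3 e (q1 * i') + - s3 e (q1 * i) + s3 e (q2 * j') + - s3 e (q2 * j) +
      s3 e (r * l') + - s3 e (r * l) + s3 e (-(p1 * r) * (i + i * i * i' + i * i' * i')) +
      s3 e (bet i j k i' j' k') := by
    simp only [← s3_neg, ← s3_add te]
    congr 1
    unfold bet
    ring
  have hU : s3 u (-(l + l') + p1 * (i' - i)) = s3 u (-(l + l')) + s3 u (p1 * i') +
      - s3 u (p1 * i) := by
    simp only [← s3_neg, ← s3_add tu]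
    congr 1
    ring
  rw [hE, hU, ← hb, ← hcc, ← hu, ← he, eq_sub_of_add_eq ha.symm]
  abel

theorem Good.iso [Finite Q] (hc : Nat.card Q = 243) {f : Q → Q} (hf : Aut f)
    {r p1 q1 q2 : ZMod 3} (S : Good f r p1 q1 q2) :
    ∃ F : V5 ≃ Q, ∀ x y, F (op5 r p1 q1 q2 x y) = (F x + -f (F x)) + f (F y) := by
  obtain ⟨e, a, b, c, u, k1, k2, k3, S⟩ := S
  exact S.iso hc hf

theorem exists_nonasc {f : Q → Q} (hf : Aut f) {m : Q → Q → Q}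
    (hm : ∀ x y, m x y = (x + -f x) + f y)
    (hn : ¬ ∀ x y u v, m (m x y) (m u v) = m (m x u) (m y v)) : ∃ a b c : Q, ¬ Asc a b c := by
  by_contra! hA
  apply hn
  let G : AddCommGroup Q :=
    { add := fun x y => x + y
      zero := 0
      neg := fun x => -x
      add_assoc := fun x y z => (hA x y z).symm
      zero_add := CML.zadd
      add_zero := addz
      nsmul := nsmulRec
      zsmul := zsmulRec
      neg_add_cancel := neg_add_self
      add_comm := CML.comm }
  let φ : Q →+ Q := AddMonoidHom.mk' f hf.add
  have hm' : ∀ x y, m x y = x - φ x + φ y := by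
    intro x y
    rw [hm, sub_eq_add_neg]
    rfl
  intro x y u v
  simp only [hm', map_add, map_sub]
  abel
end CML


theorem cube3 (x : ZMod 3) : x ^ 3 = x := by revert x; decide

section reps
variable (r p1 q1 q2 : ZMod 3)
theorem op5_idem (x : V5) : op5 r p1 q1 q2 x x = x := by
  obtain ⟨i, j, k, l, m⟩ := x
  simp only [op5, Prod.mk.injEq]
  have := cube3 i
  refine ⟨?_, ?_, ?_, ?_, ?_⟩ <;> grind
theorem op5_ss (x y : V5) : op5 r p1 q1 q2 y (op5 r p1 q1 q2 x y) = x := by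
  obtain ⟨i, j, k, l, m⟩ := x
  obtain ⟨i', j', k', l', m'⟩ := y
  simp only [op5, Prod.mk.injEq]
  have := cube3 i
  have := cube3 i'
  refine ⟨?_, ?_, ?_, ?_, ?_⟩ <;> grind
theorem op5_ss' (x y : V5) : op5 r p1 q1 q2 (op5 r p1 q1 q2 x y) x = y := by
  obtain ⟨i, j, k, l, m⟩ := x
  obtain ⟨i', j', k', l', m'⟩ := y
  simp only [op5, Prod.mk.injEq]
  have := cube3 i
  have := cube3 i'
  refine ⟨?_, ?_, ?_, ?_, ?_⟩ <;> grind
theorem op5_ld (x y z : V5) : op5 r p1 q1 q2 x (op5 r p1 q1 q2 y z) =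
    op5 r p1 q1 q2 (op5 r p1 q1 q2 x y) (op5 r p1 q1 q2 x z) := by
  obtain ⟨i, j, k, l, m⟩ := x
  obtain ⟨i', j', k', l', m'⟩ := y
  obtain ⟨i2, j2, k2, l2, m2⟩ := z
  simp only [op5, Prod.mk.injEq]
  have := cube3 i
  have := cube3 i'
  have := cube3 i2
  refine ⟨?_, ?_, ?_, ?_, ?_⟩ <;> grind
theorem op5_rd (x y z : V5) : op5 r p1 q1 q2 (op5 r p1 q1 q2 x y) z =
    op5 r p1 q1 q2 (op5 r p1 q1 q2 x z) (op5 r p1 q1 q2 y z) := by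
  obtain ⟨i, j, k, l, m⟩ := x
  obtain ⟨i', j', k', l', m'⟩ := y
  obtain ⟨i2, j2, k2, l2, m2⟩ := z
  simp only [op5, Prod.mk.injEq]
  have := cube3 i
  have := cube3 i'
  have := cube3 i2
  refine ⟨?_, ?_, ?_, ?_, ?_⟩ <;> grind
theorem op5_nonmed : op5 r p1 q1 q2 (op5 r p1 q1 q2 (0, 0, 0, 0, 0) (1, 0, 0, 0, 0))
      (op5 r p1 q1 q2 (0, 1, 0, 0, 0) (0, 0, 1, 0, 0)) ≠
    op5 r p1 q1 q2 (op5 r p1 q1 q2 (0, 0, 0, 0, 0) (0, 1, 0, 0, 0))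
      (op5 r p1 q1 q2 (1, 0, 0, 0, 0) (0, 0, 1, 0, 0)) := by
  revert r p1 q1 q2
  decide
/-- elements with equal first coordinate satisfy the medial law -/
theorem op5_med (x y u v : V5) (h1 : y.1 = x.1) (h2 : u.1 = x.1) (h3 : v.1 = x.1) :
    op5 r p1 q1 q2 (op5 r p1 q1 q2 x y) (op5 r p1 q1 q2 u v) =
    op5 r p1 q1 q2 (op5 r p1 q1 q2 x u) (op5 r p1 q1 q2 y v) := by
  obtain ⟨i, j, k, l, m⟩ := x
  obtain ⟨i', j', k', l', m'⟩ := y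
  obtain ⟨i2, j2, k2, l2, m2⟩ := u
  obtain ⟨i3, j3, k3, l3, m3⟩ := v
  simp only at h1 h2 h3
  subst h1 h2 h3
  simp only [op5, Prod.mk.injEq]
  have := cube3 i3
  refine ⟨?_, ?_, ?_, ?_, ?_⟩ <;> grind
/-- the medial law holds up to the last coordinate -/
theorem op5_med4 (x y u v : V5) :
    (op5 r p1 q1 q2 (op5 r p1 q1 q2 x y) (op5 r p1 q1 q2 u v)).2.2.2.1 =
    (op5 r p1 q1 q2 (op5 r p1 q1 q2 x u) (op5 r p1 q1 q2 y v)).2.2.2.1 := by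
  obtain ⟨i, j, k, l, m⟩ := x
  obtain ⟨i', j', k', l', m'⟩ := y
  obtain ⟨i2, j2, k2, l2, m2⟩ := u
  obtain ⟨i3, j3, k3, l3, m3⟩ := v
  simp only [op5]
  ring
theorem op5_comm_iff (x y : V5) : op5 r p1 q1 q2 x y = op5 r p1 q1 q2 y x ↔
    p1 * (y.1 - x.1) = 0 ∧ q1 * (y.1 - x.1) + q2 * (y.2.1 - x.2.1) +
      r * (y.2.2.2.1 - x.2.2.2.1) = 0 := by
  obtain ⟨i, j, k, l, m⟩ := x
  obtain ⟨i', j', k', l', m'⟩ := y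
  simp only [op5, Prod.mk.injEq]
  constructor
  · rintro ⟨-, -, -, h4, h5⟩
    constructor <;> grind
  · rintro ⟨h1, h2⟩
    refine ⟨?_, ?_, ?_, ?_, ?_⟩ <;> grind
end reps

section inv
variable {X Y : Type}
/-- isomorphism of operations -/
def Isop (m : X → X → X) (m' : Y → Y → Y) : Prop := ∃ F : X ≃ Y, ∀ x y, F (m x y) = m' (F x) (F y)
theorem Isop.symm {m : X → X → X} {m' : Y → Y → Y} (h : Isop m m') : Isop m' m := by
  obtain ⟨F, hF⟩ := h
  exact ⟨F.symm, fun x y => by rw [Equiv.symm_apply_eq, hF, F.apply_symm_apply, F.apply_symm_apply]⟩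

/-- invariants -/
def I1 (m : X → X → X) : Prop := ∀ x y, m x y = m y x
/-- invariants -/
def I2 (m : X → X → X) : Prop := ∀ x y u v, m x y = m y x → m x u = m u x → m x v = m v x →
  m (m x y) (m u v) = m (m x u) (m y v)
/-- invariants -/
def I3 (m : X → X → X) : Prop := ∀ x y, m (m x y) (m y x) = m (m y x) (m x y)
/-- invariants -/
def I4 (m : X → X → X) : Prop := ∀ x y z, m x y ≠ m y x → m z x = m x z ∨ m z y = m y z ∨
  m z (m x y) = m (m x y) z
/-- invariants -/
def I5 (m : X → X → X) : Prop := ∀ x y u v s t, m s t = m (m x y) (m u v) →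
  m t s = m (m x u) (m y v) → m s t = m t s

theorem I1.of {m : X → X → X} {m' : Y → Y → Y} (h : Isop m m') (h' : I1 m') : I1 m := by
  obtain ⟨F, hF⟩ := h
  intro x y
  apply F.injective
  rw [hF, hF]; exact h' _ _
theorem I2.of {m : X → X → X} {m' : Y → Y → Y} (h : Isop m m') (h' : I2 m') : I2 m := by
  obtain ⟨F, hF⟩ := h
  intro x y u v h1 h2 h3
  apply F.injective
  rw [← F.apply_eq_iff_eq] at h1 h2 h3
  simp only [hF] at *
  exact h' _ _ _ _ h1 h2 h3
theorem I3.of {m : X → X → X} {m' : Y → Y → Y} (h : Isop m m') (h' : I3 m') : I3 m := by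
  obtain ⟨F, hF⟩ := h
  intro x y
  apply F.injective
  simp only [hF] at *
  exact h' _ _
theorem I4.of {m : X → X → X} {m' : Y → Y → Y} (h : Isop m m') (h' : I4 m') : I4 m := by
  obtain ⟨F, hF⟩ := h
  intro x y z h1
  rw [← F.injective.ne_iff] at h1
  rw [← F.apply_eq_iff_eq, ← F.apply_eq_iff_eq (x := m z y), ← F.apply_eq_iff_eq (x := m z (m x y))]
  simp only [hF] at *
  exact h' _ _ _ h1
theorem I5.of {m : X → X → X} {m' : Y → Y → Y} (h : Isop m m') (h' : I5 m') : I5 m := by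
  obtain ⟨F, hF⟩ := h
  intro x y u v s t h1 h2
  apply F.injective
  rw [← F.apply_eq_iff_eq] at h1 h2
  simp only [hF] at *
  exact h' _ _ _ _ _ _ h1 h2
end inv

/-- the six parameter choices -/
def opn : Fin 6 → V5 → V5 → V5
  | 0 => op5 0 0 0 0
  | 1 => op5 0 0 1 0
  | 2 => op5 0 1 0 0
  | 3 => op5 0 1 0 1
  | 4 => op5 1 0 0 0
  | 5 => op5 1 1 0 0

theorem opn_eq (i : Fin 6) : ∃ r p1 q1 q2, opn i = op5 r p1 q1 q2 := by
  fin_cases i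
  · exact ⟨0, 0, 0, 0, rfl⟩
  · exact ⟨0, 0, 1, 0, rfl⟩
  · exact ⟨0, 1, 0, 0, rfl⟩
  · exact ⟨0, 1, 0, 1, rfl⟩
  · exact ⟨1, 0, 0, 0, rfl⟩
  · exact ⟨1, 1, 0, 0, rfl⟩

theorem I1_0 : I1 (op5 0 0 0 0) := by
  intro x y
  rw [op5_comm_iff]
  constructor <;> ring
theorem nI1 {r p1 q1 q2 : ZMod 3} (h : ¬ (r = 0 ∧ p1 = 0 ∧ q1 = 0 ∧ q2 = 0)) :
    ¬ I1 (op5 r p1 q1 q2) := by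
  intro hh
  have h1 := hh (0, 0, 0, 0, 0) (1, 0, 0, 0, 0)
  have h2 := hh (0, 0, 0, 0, 0) (0, 1, 0, 0, 0)
  have h3 := hh (0, 0, 0, 0, 0) (0, 0, 0, 1, 0)
  rw [op5_comm_iff] at h1 h2 h3
  simp only [_root_.sub_zero, mul_zero, mul_one, add_zero, zero_add, true_and] at h1 h2 h3
  exact h ⟨h3, h1.1, h1.2, h2⟩
theorem comm_first {r p1 q1 q2 : ZMod 3} (h : p1 = 1 ∨ (r = 0 ∧ q1 = 1 ∧ q2 = 0)) {x y : V5}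
    (hc : op5 r p1 q1 q2 x y = op5 r p1 q1 q2 y x) : y.1 = x.1 := by
  rw [op5_comm_iff] at hc
  rcases h with rfl | ⟨rfl, rfl, rfl⟩
  · rw [one_mul] at hc
    exact sub_eq_zero.1 hc.1
  · simp only [one_mul, zero_mul, add_zero] at hc
    exact sub_eq_zero.1 hc.2
theorem I2_of {r p1 q1 q2 : ZMod 3} (h : p1 = 1 ∨ (r = 0 ∧ q1 = 1 ∧ q2 = 0)) :
    I2 (op5 r p1 q1 q2) := by
  intro x y u v h1 h2 h3
  exact op5_med _ _ _ _ _ _ _ _ (comm_first h h1) (comm_first h h2) (comm_first h h3)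
theorem nI2 : ¬ I2 (op5 1 0 0 0) := by
  intro h
  exact op5_nonmed 1 0 0 0 (h _ _ _ _ (by decide) (by decide) (by decide))
theorem I3_of {p1 q1 q2 : ZMod 3} : I3 (op5 0 p1 q1 q2) := by
  intro x y
  rw [op5_comm_iff]
  obtain ⟨i, j, k, l, m⟩ := x
  obtain ⟨i', j', k', l', m'⟩ := y
  simp only [op5]
  constructor <;> ring
theorem nI3 : ¬ I3 (op5 1 1 0 0) := by
  intro h
  have := h (0, 0, 0, 0, 0) (1, 0, 0, 0, 0)
  revert this
  decide
theorem I4_of {p1 q1 : ZMod 3} : I4 (op5 0 p1 q1 0) := by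
  intro x y z h
  have hc : ∀ a b : V5, a.1 = b.1 → op5 0 p1 q1 0 a b = op5 0 p1 q1 0 b a := by
    intro a b hab
    rw [op5_comm_iff, hab]
    constructor <;> ring
  have h1 : x.1 ≠ y.1 := fun hh => h (hc _ _ hh)
  have h2 : ∀ i i' i2 : ZMod 3, i ≠ i' → i2 = i ∨ i2 = i' ∨ i2 = -(i + i') := by decide
  rcases h2 x.1 y.1 z.1 h1 with h3 | h3 | h3
  · exact Or.inl (hc _ _ h3)
  · exact Or.inr (Or.inl (hc _ _ h3))
  · exact Or.inr (Or.inr (hc _ _ h3))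
theorem nI4 : ¬ I4 (op5 0 1 0 1) := by
  intro h
  have := h (0, 0, 0, 0, 0) (1, 0, 0, 0, 0) (0, 1, 0, 0, 0)
  revert this
  decide
theorem I5_2 : I5 (op5 0 1 0 0) := by
  intro x y u v s t h1 h2
  have h3 := op5_med4 0 1 0 0 x y u v
  rw [← h1, ← h2] at h3
  rw [op5_comm_iff]
  obtain ⟨i, j, k, l, m⟩ := s
  obtain ⟨i', j', k', l', m'⟩ := t
  simp only [op5] at h3
  simp only
  constructor <;> grind
theorem nI5 : ¬ I5 (op5 0 0 1 0) := by
  intro h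
  have := h (0, 0, 0, 0, 0) (1, 0, 0, 0, 0) (0, 1, 0, 0, 0) (0, 0, 1, 0, 0) (2, 0, 0, 0, 0)
    (0, 2, 2, 0, 1)
  revert this
  decide

theorem opn_lt {i j : Fin 6} (hij : i < j) (h : Isop (opn i) (opn j)) : False := by
  have T0 : ∀ r p1 q1 q2, ¬ (r = 0 ∧ p1 = 0 ∧ q1 = 0 ∧ q2 = 0) → Isop (op5 0 0 0 0) (op5 r p1 q1 q2) →
      False := fun r p1 q1 q2 hn hI => nI1 hn (I1.of hI.symm I1_0)
  have T2 : ∀ r p1 q1 q2, (p1 = 1 ∨ (r = 0 ∧ q1 = 1 ∧ q2 = 0)) → 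
      Isop (op5 1 0 0 0) (op5 r p1 q1 q2) → False := fun r p1 q1 q2 hn hI => nI2 (I2.of hI (I2_of hn))
  have T3 : ∀ p1 q1 q2, Isop (op5 0 p1 q1 q2) (op5 1 1 0 0) → False :=
    fun p1 q1 q2 hI => nI3 (I3.of hI.symm I3_of)
  have T4 : ∀ p1 q1, Isop (op5 0 p1 q1 0) (op5 0 1 0 1) → False :=
    fun p1 q1 hI => nI4 (I4.of hI.symm I4_of)
  fin_cases i <;> fin_cases j <;> first | (exact absurd hij (by decide)) | skip
  · exact T0 _ _ _ _ (by decide) h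
  · exact T0 _ _ _ _ (by decide) h
  · exact T0 _ _ _ _ (by decide) h
  · exact T0 _ _ _ _ (by decide) h
  · exact T0 _ _ _ _ (by decide) h
  · exact nI5 (I5.of h I5_2)
  · exact T4 _ _ h
  · exact T2 _ _ _ _ (by decide) h.symm
  · exact T3 _ _ _ h
  · exact T4 _ _ h
  · exact T2 _ _ _ _ (by decide) h.symm
  · exact T3 _ _ _ h
  · exact T2 _ _ _ _ (by decide) h.symm
  · exact T3 _ _ _ h
  · exact T2 _ _ _ _ (by decide) h

theorem opn_ne {i j : Fin 6} (hij : i ≠ j) (h : Isop (opn i) (opn j)) : False := by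
  rcases lt_or_gt_of_ne hij with h1 | h1
  · exact opn_lt h1 h
  · exact opn_lt h1 h.symm

theorem classify {Q : Type} (hc : Nat.card Q = 243) {m : Q → Q → Q} (h : DM m)
    (hn : ¬ ∀ x y u v, m (m x y) (m u v) = m (m x u) (m y v)) : ∃ i, Isop m (opn i) := by
  have : Finite Q := Nat.finite_of_card_ne_zero (by rw [hc]; norm_num)
  have : Nonempty Q := (Nat.card_pos_iff.1 (by rw [hc]; norm_num)).1
  obtain ⟨o⟩ := this
  obtain ⟨iQ, f, hadd, hm, hff, hk⟩ := h.exists_cml o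
  have hf : CML.Aut f := ⟨hadd, hff, hk⟩
  obtain ⟨a, b, c, habc⟩ := CML.exists_nonasc hf hm hn
  have key : ∀ {r p1 q1 q2}, CML.Good f r p1 q1 q2 → Isop m (op5 r p1 q1 q2) := by
    intro r p1 q1 q2 hg
    obtain ⟨F, hF⟩ := hg.iso hc hf
    exact Isop.symm ⟨F, fun x y => by rw [hF, hm]⟩
  rcases CML.normal hc hf habc with g | g | g | g | g | g
  · exact ⟨0, key g⟩
  · exact ⟨1, key g⟩
  · exact ⟨2, key g⟩
  · exact ⟨3, key g⟩
  · exact ⟨4, key g⟩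
  · exact ⟨5, key g⟩


/-- transported representatives -/
noncomputable def sig : V5 ≃ Fin 243 := Fintype.equivFinOfCardEq (by
  simp only [V5, Fintype.card_prod, ZMod.card])

/-- transported operation -/
noncomputable def opf (i : Fin 6) (x y : Fin 243) : Fin 243 := sig (opn i (sig.symm x) (sig.symm y))

theorem opn_dm (i : Fin 6) : DM (opn i) := by
  obtain ⟨r, p1, q1, q2, h⟩ := opn_eq i
  rw [h]
  exact ⟨op5_idem _ _ _ _, op5_ss _ _ _ _, op5_ss' _ _ _ _, op5_ld _ _ _ _, op5_rd _ _ _ _⟩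

theorem opf_dm (i : Fin 6) : DM (opf i) := by
  have h := opn_dm i
  constructor
  · intro x; simp only [opf, h.idem, Equiv.apply_symm_apply]
  · intro x y; simp only [opf, Equiv.symm_apply_apply, h.ss, Equiv.apply_symm_apply]
  · intro x y; simp only [opf, Equiv.symm_apply_apply, h.ss', Equiv.apply_symm_apply]
  · intro x y z; simp only [opf, Equiv.symm_apply_apply]; rw [h.ld]
  · intro x y z; simp only [opf, Equiv.symm_apply_apply]; rw [h.rd]

theorem opf_iso (i : Fin 6) : Isop (opn i) (opf i) :=
  ⟨sig, fun x y => by simp only [opf, Equiv.symm_apply_apply]⟩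

theorem Isop.trans {X Y Z : Type} {m : X → X → X} {m' : Y → Y → Y} {m'' : Z → Z → Z}
    (h : Isop m m') (h' : Isop m' m'') : Isop m m'' := by
  obtain ⟨F, hF⟩ := h
  obtain ⟨G, hG⟩ := h'
  exact ⟨F.trans G, fun x y => by simp only [Equiv.trans_apply, hF, hG]⟩

/-- the representatives as quasigroups -/
noncomputable def repq (i : Fin 6) : Quasigroup (Fin 243) where
  mul := opf i
  leftBij x := Function.bijective_iff_has_inverse.2 ⟨fun y => opf i y x,
    fun y => (opf_dm i).ss' x y, fun y => (opf_dm i).ss y x⟩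
  rightBij x := Function.bijective_iff_has_inverse.2 ⟨fun y => opf i x y,
    fun y => (opf_dm i).ss y x, fun y => (opf_dm i).ss' x y⟩

theorem repq_nonmed (i : Fin 6) : ¬ (repq i).Medial := by
  intro hm
  obtain ⟨r, p1, q1, q2, h⟩ := opn_eq i
  apply op5_nonmed r p1 q1 q2
  have h1 := hm (sig (0, 0, 0, 0, 0)) (sig (1, 0, 0, 0, 0)) (sig (0, 1, 0, 0, 0))
    (sig (0, 0, 1, 0, 0))
  simp only [repq, opf, Equiv.symm_apply_apply, h] at h1
  exact sig.injective h1

open Quasigroup in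
/-- Up to isomorphism, there are exactly 6 distributive Mendelsohn quasigroups of order 243
that are not medial. -/
theorem stmt :
    ∃ reps : Fin 6 → Quasigroup (Fin 243),
      (∀ i, (Distributive (reps i) ∧ Mendelsohn (reps i)) ∧ ¬ Medial (reps i)) ∧
      (∀ i j, i ≠ j → ¬ Iso (reps i) (reps j)) ∧
      (∀ (Q : Type) (q : Quasigroup Q), Nat.card Q = 243 →
        (Distributive q ∧ Mendelsohn q) → ¬ Medial q → ∃ i, Iso q (reps i)) := by
  refine ⟨repq, ?_, ?_, ?_⟩
  · intro i
    have h := opf_dm i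
    exact ⟨⟨⟨h.ld, h.rd⟩, ⟨h.idem, h.ss⟩⟩, repq_nonmed i⟩
  · intro i j hij hI
    have h : Isop (opf i) (opf j) := hI
    exact opn_ne hij (((opf_iso i).trans h).trans (opf_iso j).symm)
  · intro Q q hc hq hn
    have hd : DM q.mul := by
      refine ⟨hq.2.1, hq.2.2, ?_, hq.1.1, hq.1.2⟩
      intro x y
      have h1 := hq.2.2 (q.mul x y) x
      exact (q.leftBij x).1 h1
    obtain ⟨i, hi⟩ := classify hc hd hn
    exact ⟨i, hi.trans (opf_iso i)⟩
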